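/- arXiv:2001.08549 — 4 statements merged into one kernel-verified Lean document; each statement's English description precedes it below -/
import Mathlib

section
/- Fix α ∈ (0,1). For every ε > 0 there exists N such that for all n ≥ N, the Dushnik–Miller dimension of the divisibility poset on the set of integers in (n^α, n] satisfies ((1−α)²/16 − ε)·(log n)²/(log log n)² ≤ dim(D_{(n^α, n]}) ≤ (4 + ε)·(log n)²/(log log n). -/
/-- The Dushnik-Miller dimension of the divisibility poset on a set `S ⊆ ℕ`:
the least `d` such that there is an order embedding of `(S, ∣)` into `ℝ^d`
with the componentwise order. -/
noncomputable def divDim (S : Set ℕ) : ℕ :=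
  sInf {d : ℕ | ∃ f : ℕ → (Fin d → ℝ), ∀ a ∈ S, ∀ b ∈ S, (f a ≤ f b ↔ a ∣ b)}

open Classical in
lemma greedy_cover {X Y : Type} [Fintype X] [Fintype Y] [Nonempty Y] (R : X → Y → Prop) (p : ℝ)
    (h : ∀ x, p * Fintype.card Y ≤ ((Finset.univ.filter (fun y => R x y)).card : ℝ))
    (hp : p ≤ 1) (t : ℕ) :
    ∃ F : Finset Y, F.card ≤ t ∧
      ((Finset.univ.filter (fun x => ∀ y ∈ F, ¬ R x y)).card : ℝ) ≤ (1 - p) ^ t * Fintype.card X := by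
  induction t with
  | zero => exact ⟨∅, by simp, by simp⟩
  | succ t ih =>
    obtain ⟨F, hF, hb⟩ := ih
    set Z := Finset.univ.filter (fun x => ∀ y ∈ F, ¬ R x y) with hZ
    have h1 : ∑ y : Y, ((Z.filter (fun x => R x y)).card : ℝ)
        = ∑ x ∈ Z, ((Finset.univ.filter (fun y => R x y)).card : ℝ) := by
      simp only [Finset.card_filter, Nat.cast_sum]
      rw [Finset.sum_comm]
    have h2 : p * Fintype.card Y * Z.card ≤ ∑ y : Y, ((Z.filter (fun x => R x y)).card : ℝ) := by
      rw [h1]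
      calc p * Fintype.card Y * Z.card = ∑ x ∈ Z, p * (Fintype.card Y : ℝ) := by
            rw [Finset.sum_const, nsmul_eq_mul]; ring
        _ ≤ _ := Finset.sum_le_sum (fun x _ => h x)
    have h3 : ∑ y : Y, p * (Z.card : ℝ) ≤ ∑ y : Y, ((Z.filter (fun x => R x y)).card : ℝ) := by
      refine le_trans (le_of_eq ?_) h2
      rw [Finset.sum_const, nsmul_eq_mul, Finset.card_univ]; ring
    obtain ⟨y, -, hy⟩ := Finset.exists_le_of_sum_le (Finset.univ_nonempty) h3
    refine ⟨insert y F, (Finset.card_insert_le _ _).trans (by omega), ?_⟩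
    have h4 : Finset.univ.filter (fun x => ∀ y' ∈ insert y F, ¬ R x y') = Z.filter (fun x => ¬ R x y) := by
      ext x
      simp [hZ, and_comm]
    rw [h4]
    have h5 := Finset.card_filter_add_card_filter_not (s := Z) (fun x => R x y)
    have h6 : ((Z.filter (fun x => R x y)).card : ℝ) + ((Z.filter (fun x => ¬ R x y)).card : ℝ)
      = Z.card := by exact_mod_cast h5
    calc ((Z.filter (fun x => ¬ R x y)).card : ℝ) ≤ (1 - p) * Z.card := by linarith
      _ ≤ (1 - p) * ((1 - p) ^ t * Fintype.card X) :=
          mul_le_mul_of_nonneg_left hb (by linarith)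
      _ = _ := by ring

open Classical in
lemma greedy_cover' {X Y : Type} [Fintype X] [Fintype Y] [Nonempty Y] (R : X → Y → Prop) (p : ℝ)
    (h : ∀ x, p * Fintype.card Y ≤ ((Finset.univ.filter (fun y => R x y)).card : ℝ))
    (hp : p ≤ 1) (t : ℕ) (ht : (1 - p) ^ t * Fintype.card X < 1) :
    ∃ F : Finset Y, F.card ≤ t ∧ ∀ x, ∃ y ∈ F, R x y := by
  obtain ⟨F, hF, hb⟩ := greedy_cover R p h hp t
  refine ⟨F, hF, ?_⟩
  have hz : (Finset.univ.filter (fun x => ∀ y ∈ F, ¬ R x y)).card = 0 := by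
    have h1 := lt_of_le_of_lt hb ht
    have : (Finset.univ.filter (fun x => ∀ y ∈ F, ¬ R x y)).card < 1 := by exact_mod_cast h1
    omega
  intro x
  by_contra! hcon
  rw [Finset.card_eq_zero] at hz
  have : x ∈ Finset.univ.filter (fun x => ∀ y ∈ F, ¬ R x y) := by
    simpa using hcon
  rw [hz] at this
  simp at this

open Classical in
lemma perm_count {Q : Type} [Fintype Q] [LinearOrder Q] (S : Finset Q) (q : Q) (hq : q ∈ S) :
    Fintype.card (Equiv.Perm Q) ≤ S.card *
      (Finset.univ.filter (fun σ : Equiv.Perm Q => ∀ x ∈ S, x ≠ q → σ x < σ q)).card := by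
  set A : Q → Finset (Equiv.Perm Q) :=
    fun q => Finset.univ.filter (fun σ : Equiv.Perm Q => ∀ x ∈ S, x ≠ q → σ x < σ q) with hA
  have h1 : (Finset.univ : Finset (Equiv.Perm Q)) ⊆ S.biUnion A := by
    intro σ _
    obtain ⟨x, hx, hm⟩ := Finset.exists_max_image S (fun x => σ x) ⟨q, hq⟩
    simp only [Finset.mem_biUnion, hA, Finset.mem_filter, Finset.mem_univ, true_and]
    exact ⟨x, hx, fun y hy hne => lt_of_le_of_ne (hm y hy) (fun e => hne (σ.injective e))⟩
  have h2 : ∀ x ∈ S, (A x).card ≤ (A q).card := by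
    intro x hx
    apply Finset.card_le_card_of_injOn (fun σ => σ * Equiv.swap x q)
    · intro σ hσ
      simp only [hA, Finset.coe_filter, Finset.mem_univ, true_and, Set.mem_ofPred_eq] at hσ ⊢
      intro y hy hne
      simp only [Equiv.Perm.mul_apply, Equiv.swap_apply_right]
      apply hσ
      · rcases eq_or_ne y x with rfl | h
        · simpa using hq
        · rwa [Equiv.swap_apply_of_ne_of_ne h hne]
      · intro e
        apply hne
        exact (Equiv.swap x q).injective (e.trans (Equiv.swap_apply_right x q).symm)
    · intro a _ b _ e
      exact mul_right_cancel e
  calc Fintype.card (Equiv.Perm Q) = (Finset.univ : Finset (Equiv.Perm Q)).card := rfl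
    _ ≤ (S.biUnion A).card := Finset.card_le_card h1
    _ ≤ S.card * (A q).card := Finset.card_biUnion_le_card_mul _ _ _ h2

open Classical in
lemma suitable_family (Q : Finset ℕ) (k t : ℕ)
    (ht : ((k : ℝ) + 1) ^ 2 * Real.log Q.card < t) :
    ∃ F : Finset (ℕ → ℕ), F.card ≤ t ∧ ∀ q ∈ Q, ∀ B ⊆ Q, B.card ≤ k →
      ∃ L ∈ F, ∀ b ∈ B, b ≠ q → L b < L q := by
  rcases Q.eq_empty_or_nonempty with rfl | hne
  · exact ⟨∅, by simp, by simp⟩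
  have hN : (0 : ℝ) < Q.card := by exact_mod_cast hne.card_pos
  let R : (Q × (Fin k → Q)) → Equiv.Perm Q → Prop :=
    fun x σ => ∀ y ∈ insert x.1 (Finset.univ.image x.2), y ≠ x.1 → σ y < σ x.1
  have hk : (0 : ℝ) < (k : ℝ) + 1 := by positivity
  have hcard : (Fintype.card (Q × (Fin k → Q)) : ℝ) = (Q.card : ℝ) ^ (k + 1) := by
    simp [pow_succ, mul_comm]
  have hlt : (1 - 1 / ((k : ℝ) + 1)) ^ t * Fintype.card (Q × (Fin k → Q)) < 1 := by
    rw [hcard]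
    have e1 : (1 - 1 / ((k : ℝ) + 1)) ^ t ≤ Real.exp (-(t / ((k : ℝ) + 1))) := by
      have : Real.exp (-(t / ((k : ℝ) + 1))) = Real.exp (-(1 / ((k : ℝ) + 1))) ^ t := by
        rw [← Real.exp_nat_mul]; congr 1; ring
      rw [this]
      apply pow_le_pow_left₀
      · rw [sub_nonneg, div_le_one hk]; linarith [(Nat.cast_nonneg k : (0:ℝ) ≤ k)]
      · linarith [Real.add_one_le_exp (-(1 / ((k : ℝ) + 1)))]
    have e2 : (Q.card : ℝ) ^ (k + 1) = Real.exp (((k : ℝ) + 1) * Real.log Q.card) := by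
      rw [mul_comm, Real.exp_mul, Real.exp_log hN, ← Nat.cast_succ, Real.rpow_natCast]
    rw [e2]
    calc _ ≤ Real.exp (-(t / ((k : ℝ) + 1))) * Real.exp (((k : ℝ) + 1) * Real.log Q.card) := by
          gcongr
      _ = Real.exp (-(t / ((k : ℝ) + 1)) + ((k : ℝ) + 1) * Real.log Q.card) := by
          rw [Real.exp_add]
      _ < 1 := by
          rw [Real.exp_lt_one_iff]
          have : ((k : ℝ) + 1) * Real.log Q.card < t / ((k : ℝ) + 1) := by
            rw [lt_div_iff₀ hk]; linarith
          linarith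
  obtain ⟨F, hF, hall⟩ := greedy_cover' R (1 / ((k : ℝ) + 1)) (by
    intro x
    have h := perm_count (insert x.1 (Finset.univ.image x.2)) x.1 (Finset.mem_insert_self _ _)
    have hc : (insert x.1 (Finset.univ.image x.2)).card ≤ k + 1 := by
      refine (Finset.card_insert_le _ _).trans ?_
      have := Finset.card_image_le (s := Finset.univ) (f := x.2)
      simp at this
      omega
    have h' := h.trans (Nat.mul_le_mul_right _ hc)
    have h'' : (Fintype.card (Equiv.Perm Q) : ℝ) ≤ ((k : ℝ) + 1) *
        ((Finset.univ.filter (fun σ => R x σ)).card : ℝ) := by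
      exact_mod_cast h'
    rw [one_div, inv_mul_le_iff₀ hk]
    refine h''.trans (le_of_eq ?_)
    congr!) (by rw [div_le_one hk]; linarith [(Nat.cast_nonneg k : (0:ℝ) ≤ k)]) t hlt
  refine ⟨F.image (fun σ p => if h : p ∈ Q then ((σ ⟨p, h⟩ : Q) : ℕ) else 0),
    Finset.card_image_le.trans hF, ?_⟩
  intro q hq B hB hBk
  have : Nonempty (B ↪ Fin k) := by
    rw [Function.Embedding.nonempty_iff_card_le]; simpa using hBk
  obtain ⟨e⟩ := this
  let g : Fin k → Q := Function.extend e (fun b => ⟨b.1, hB b.2⟩) (fun _ => ⟨q, hq⟩)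
  obtain ⟨σ, hσ, hR⟩ := hall (⟨q, hq⟩, g)
  refine ⟨_, Finset.mem_image_of_mem _ hσ, ?_⟩
  intro b hb hbq
  have := hR ⟨b, hB hb⟩ (by
    apply Finset.mem_insert_of_mem
    rw [Finset.mem_image]
    refine ⟨e ⟨b, hb⟩, Finset.mem_univ _, ?_⟩
    simp only [g]
    rw [e.injective.extend_apply]) (by simpa using hbq)
  simp only [hB hb, hq, dif_pos]
  exact this

/-- A family of monotone functions detecting valuations at the elements of `Q`. -/
def DetFam (n : ℕ) (Q : Finset ℕ) (G : Finset (ℕ → ℕ)) : Prop :=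
  (∀ g ∈ G, ∀ a b, 1 ≤ a → a ≤ n → 1 ≤ b → b ≤ n → a ∣ b → g a ≤ g b) ∧
  (∀ a b, 1 ≤ a → a ≤ n → 1 ≤ b → b ≤ n → ∀ q ∈ Q, b.factorization q < a.factorization q →
    ∃ g ∈ G, g b < g a)

open Classical in
lemma DetFam.union {n : ℕ} {Q Q' Q'' : Finset ℕ} {G G' : Finset (ℕ → ℕ)} (h : DetFam n Q G)
    (h' : DetFam n Q' G') (hQ : Q'' ⊆ Q ∪ Q') : DetFam n Q'' (G ∪ G') := by
  refine ⟨?_, ?_⟩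
  · intro g hg
    rcases Finset.mem_union.1 hg with hg | hg
    · exact h.1 g hg
    · exact h'.1 g hg
  · intro a b ha han hb hbn q hq hlt
    rcases Finset.mem_union.1 (hQ hq) with hq | hq
    · obtain ⟨g, hg, hh⟩ := h.2 a b ha han hb hbn q hq hlt
      exact ⟨g, Finset.mem_union_left _ hg, hh⟩
    · obtain ⟨g, hg, hh⟩ := h'.2 a b ha han hb hbn q hq hlt
      exact ⟨g, Finset.mem_union_right _ hg, hh⟩

open Classical in
lemma detFam_small (n : ℕ) (Q : Finset ℕ) : ∃ G, G.card ≤ Q.card ∧ DetFam n Q G := by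
  refine ⟨Q.image (fun q a => a.factorization q), Finset.card_image_le, ?_, ?_⟩
  · intro g hg a b ha _ hb _ hab
    obtain ⟨q, hq, rfl⟩ := Finset.mem_image.1 hg
    exact (Nat.factorization_le_iff_dvd (by omega) (by omega)).2 hab q
  · intro a b _ _ _ _ q hq hlt
    exact ⟨_, Finset.mem_image_of_mem _ hq, hlt⟩

open Classical in
lemma detFam_large (n : ℕ) (Q : Finset ℕ) (k t : ℕ)
    (ht : ((k : ℝ) + 1) ^ 2 * Real.log Q.card < t)
    (hk : ∀ b, 1 ≤ b → b ≤ n → (Q ∩ b.primeFactors).card ≤ k) :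
    ∃ G, G.card ≤ t ∧ DetFam n Q G := by
  obtain ⟨F, hF, hS⟩ := suitable_family Q k t ht
  set M := (Q.card + 1) * n with hM
  refine ⟨F.image (fun L a => ∑ q ∈ Q, a.factorization q * M ^ L q),
    Finset.card_image_le.trans hF, ?_, ?_⟩
  · intro g hg a b ha _ hb _ hab
    obtain ⟨L, hL, rfl⟩ := Finset.mem_image.1 hg
    refine Finset.sum_le_sum fun q _ => Nat.mul_le_mul_right _ ?_
    exact (Nat.factorization_le_iff_dvd (by omega) (by omega)).2 hab q
  · intro a b ha han hb hbn q hq hlt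
    obtain ⟨L, hL, hlt'⟩ := hS q hq (Q ∩ b.primeFactors) Finset.inter_subset_left (hk b hb hbn)
    refine ⟨_, Finset.mem_image_of_mem _ hL, ?_⟩
    have hMpos : 0 < M := Nat.mul_pos (by omega) (by omega)
    have h1 : a.factorization q * M ^ L q ≤ ∑ q ∈ Q, a.factorization q * M ^ L q :=
      Finset.single_le_sum (f := fun q => a.factorization q * M ^ L q)
        (fun _ _ => Nat.zero_le _) hq
    refine lt_of_lt_of_le ?_ h1
    rw [← Finset.add_sum_erase _ _ hq]
    have h2 : (∑ x ∈ Q.erase q, b.factorization x * M ^ L x) * M ≤ (Q.card * n) * M ^ L q := by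
      rw [Finset.sum_mul]
      have : ∀ x ∈ Q.erase q, b.factorization x * M ^ L x * M ≤ n * M ^ L q := by
        intro x hx
        rw [Finset.mem_erase] at hx
        by_cases hxb : x ∈ b.primeFactors
        · have := hlt' x (Finset.mem_inter.2 ⟨hx.2, hxb⟩) hx.1
          rw [mul_assoc, ← pow_succ]
          apply Nat.mul_le_mul
          · exact (Nat.factorization_lt x (by omega)).le.trans hbn
          · exact Nat.pow_le_pow_right hMpos this
        · rw [← Nat.support_factorization, Finsupp.notMem_support_iff] at hxb
          simp [hxb]
      refine (Finset.sum_le_sum this).trans ?_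
      rw [Finset.sum_const, smul_eq_mul, ← mul_assoc]
      gcongr
      exact Finset.erase_subset _ _
    have h3 : (∑ x ∈ Q.erase q, b.factorization x * M ^ L x) < M ^ L q := by
      by_contra! hcon
      have h4 : M ^ L q * M ≤ (Q.card * n) * M ^ L q := (Nat.mul_le_mul_right _ hcon).trans h2
      rw [mul_comm] at h4
      have h5 := Nat.le_of_mul_le_mul_right h4 (Nat.pow_pos hMpos)
      rw [hM] at h5
      nlinarith
    calc _ < b.factorization q * M ^ L q + M ^ L q := by omega
      _ = (b.factorization q + 1) * M ^ L q := by ring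
      _ ≤ _ := Nat.mul_le_mul_right _ hlt

lemma level (n : ℕ) (x : ℝ) (hx : 1 ≤ x) (hn : 1 ≤ n) (hxL : x ≤ Real.log n) :
    ∃ G, (G.card : ℝ) ≤ 2 * (Real.log n) ^ 2 / x + 7 * Real.log n ∧
      DetFam n (Finset.Ioc ⌊Real.exp x⌋₊ ⌊Real.exp (2 * x)⌋₊) G := by
  set L := Real.log n with hL
  set Q := Finset.Ioc ⌊Real.exp x⌋₊ ⌊Real.exp (2 * x)⌋₊ with hQ
  have hx0 : 0 < x := by linarith
  have hnR : (0 : ℝ) < n := by exact_mod_cast hn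
  have hlog : Real.log Q.card ≤ 2 * x := by
    rcases Nat.eq_zero_or_pos Q.card with h | h
    · rw [h]; simp; linarith
    · rw [Real.log_le_iff_le_exp (by exact_mod_cast h)]
      have : Q.card ≤ ⌊Real.exp (2 * x)⌋₊ := by rw [hQ, Nat.card_Ioc]; omega
      exact le_trans (by exact_mod_cast this) (Nat.floor_le (Real.exp_pos _).le)
  set k := ⌊L / x⌋₊ with hk
  have hkL : (k : ℝ) ≤ L / x := Nat.floor_le (by apply div_nonneg <;> linarith)
  have hL1 : 1 ≤ L := by linarith
  obtain ⟨G, hG, hD⟩ := detFam_large n Q k (⌊((k : ℝ) + 1) ^ 2 * (2 * x)⌋₊ + 1) (by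
      push_cast
      refine lt_of_le_of_lt ?_ (Nat.lt_floor_add_one _)
      gcongr) (by
      intro b hb hbn
      apply Nat.le_floor
      rw [le_div_iff₀ hx0, hL, Real.le_log_iff_exp_le hnR, Real.exp_nat_mul]
      have h1 : ∏ p ∈ (Q ∩ b.primeFactors), p ≤ b := by
        refine Nat.le_of_dvd hb ?_
        exact (Finset.prod_dvd_prod_of_subset _ _ _ Finset.inter_subset_right).trans
          (Nat.prod_primeFactors_dvd b)
      have h2 : ((∏ p ∈ (Q ∩ b.primeFactors), p : ℕ) : ℝ) ≤ n := by exact_mod_cast h1.trans hbn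
      refine le_trans ?_ h2
      rw [Nat.cast_prod, ← Finset.prod_const]
      refine Finset.prod_le_prod (fun _ _ => (Real.exp_pos _).le) ?_
      intro p hp
      have := (Finset.mem_Ioc.1 (Finset.mem_inter.1 hp).1).1
      exact ((Nat.floor_lt (Real.exp_pos _).le).1 this).le)
  refine ⟨G, ?_, hD⟩
  have h1 : (G.card : ℝ) ≤ ((k : ℝ) + 1) ^ 2 * (2 * x) + 1 := by
    have : (G.card : ℝ) ≤ (⌊((k : ℝ) + 1) ^ 2 * (2 * x)⌋₊ : ℝ) + 1 := by exact_mod_cast hG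
    have h := Nat.floor_le (a := ((k : ℝ) + 1) ^ 2 * (2 * x)) (by positivity)
    linarith
  have h2 : ((k : ℝ) + 1) ^ 2 * (2 * x) ≤ (L / x + 1) ^ 2 * (2 * x) := by gcongr
  have h3 : (L / x + 1) ^ 2 * (2 * x) = 2 * L ^ 2 / x + 4 * L + 2 * x := by
    field_simp; ring
  linarith

open Classical in
lemma levels (n : ℕ) (x : ℝ) (hx : 1 ≤ x) (hn : 1 ≤ n) (I : ℕ) (hI : 2 ^ I * x ≤ 2 * Real.log n) :
    ∃ G, (G.card : ℝ) ≤ 4 * (Real.log n) ^ 2 / x * (1 - 1 / 2 ^ I) + 7 * Real.log n * I ∧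
      DetFam n (Finset.Ioc ⌊Real.exp x⌋₊ ⌊Real.exp (2 ^ I * x)⌋₊) G := by
  induction I with
  | zero => exact ⟨∅, by simp, by simp [DetFam]⟩
  | succ I ih =>
    have h2 : (1 : ℝ) ≤ 2 ^ I := one_le_pow₀ (by norm_num)
    have h3 : x ≤ 2 ^ I * x := by nlinarith
    obtain ⟨G, hG, hD⟩ := ih (by rw [pow_succ] at hI; linarith)
    obtain ⟨G', hG', hD'⟩ := level n (2 ^ I * x) (by linarith) hn (by rw [pow_succ] at hI; linarith)
    refine ⟨G ∪ G', ?_, hD.union hD' ?_⟩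
    · have h := Finset.card_union_le G G'
      have h' : ((G ∪ G').card : ℝ) ≤ G.card + G'.card := by exact_mod_cast h
      refine h'.trans ((add_le_add hG hG').trans (le_of_eq ?_))
      push_cast
      have : x ≠ 0 := by linarith
      field_simp
      ring
    · intro q hq
      rw [show (2 : ℝ) ^ (I + 1) * x = 2 * (2 ^ I * x) by ring] at hq
      simp only [Finset.mem_union, Finset.mem_Ioc] at hq ⊢
      omega

open Classical in
lemma divDim_set_mem (n : ℕ) (S : Set ℕ) (hS : ∀ m ∈ S, 1 ≤ m ∧ m ≤ n) (Q : Finset ℕ)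
    (hQ : Finset.Icc 1 n ⊆ Q) (G : Finset (ℕ → ℕ)) (hG : DetFam n Q G) :
    G.card ∈ {d : ℕ | ∃ f : ℕ → (Fin d → ℝ), ∀ a ∈ S, ∀ b ∈ S, (f a ≤ f b ↔ a ∣ b)} := by
  refine ⟨fun a i => (((G.equivFin.symm i : G) : ℕ → ℕ) a : ℝ), ?_⟩
  intro a ha b hb
  obtain ⟨ha1, han⟩ := hS a ha
  obtain ⟨hb1, hbn⟩ := hS b hb
  constructor
  · intro hle
    by_contra hnd
    rw [← Nat.factorization_le_iff_dvd (by omega) (by omega), Finsupp.le_def] at hnd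
    push Not at hnd
    obtain ⟨q, hq⟩ := hnd
    have hqa : q ∈ a.primeFactors := by
      rw [← Nat.support_factorization, Finsupp.mem_support_iff]; omega
    have hqQ : q ∈ Q := hQ (Finset.mem_Icc.2 ⟨(Nat.prime_of_mem_primeFactors hqa).pos,
      (Nat.le_of_mem_primeFactors hqa).trans han⟩)
    obtain ⟨g, hg, hlt⟩ := hG.2 a b ha1 han hb1 hbn q hqQ hq
    have := hle (G.equivFin ⟨g, hg⟩)
    simp at this
    omega
  · intro hab i
    have := hG.1 _ (G.equivFin.symm i).2 a b ha1 han hb1 hbn hab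
    exact Nat.cast_le.2 this

lemma upper_main (n : ℕ) (S : Set ℕ) (hS : ∀ m ∈ S, 1 ≤ m ∧ m ≤ n) (x : ℝ) (hx : 1 ≤ x)
    (hn : 1 ≤ n) (hxL : x ≤ Real.log n) :
    ∃ d : ℕ, (d : ℝ) ≤ Real.exp x + 4 * (Real.log n) ^ 2 / x +
        7 * Real.log n * (2 * Real.log (Real.log n) + 2) ∧
      d ∈ {d : ℕ | ∃ f : ℕ → (Fin d → ℝ), ∀ a ∈ S, ∀ b ∈ S, (f a ≤ f b ↔ a ∣ b)} := by
  classical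
  set L := Real.log n with hL
  have hx0 : 0 < x := by linarith
  have hL0 : 0 < L := by linarith
  obtain ⟨j, hj1, hj2⟩ := exists_nat_pow_near (x := L / x) (y := (2 : ℝ))
    ((one_le_div hx0).2 hxL) (by norm_num)
  rw [le_div_iff₀ hx0] at hj1
  rw [div_lt_iff₀ hx0] at hj2
  obtain ⟨G, hG, hD⟩ := levels n x hx hn (j + 1) (by rw [pow_succ]; linarith)
  obtain ⟨G', hG', hD'⟩ := detFam_small n (Finset.Icc 1 ⌊Real.exp x⌋₊)
  have hU := hD'.union hD (subset_refl _)
  refine ⟨_, ?_, divDim_set_mem n S hS _ ?_ _ hU⟩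
  · have h := Finset.card_union_le G' G
    have h' : ((G' ∪ G).card : ℝ) ≤ G'.card + G.card := by exact_mod_cast h
    have h1 : (G'.card : ℝ) ≤ Real.exp x := by
      rw [Nat.card_Icc, Nat.add_sub_cancel] at hG'
      exact le_trans (by exact_mod_cast hG') (Nat.floor_le (Real.exp_pos _).le)
    have h2 : 4 * L ^ 2 / x * (1 - 1 / 2 ^ (j + 1)) ≤ 4 * L ^ 2 / x := by
      apply mul_le_of_le_one_right (by positivity)
      have : (0 : ℝ) < 1 / 2 ^ (j + 1) := by positivity
      linarith
    have h3 : ((j + 1 : ℕ) : ℝ) ≤ 2 * Real.log L + 2 := by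
      have : (2 : ℝ) ^ j ≤ L := le_trans (by nlinarith [pow_pos (two_pos : (0:ℝ) < 2) j]) hj1
      have h4 : (j : ℝ) * Real.log 2 ≤ Real.log L := by
        rw [← Real.log_pow]
        exact Real.log_le_log (by positivity) this
      have h5 := Real.log_two_gt_d9
      push_cast
      nlinarith [(Nat.cast_nonneg j : (0:ℝ) ≤ j)]
    have h4 : 7 * L * ((j + 1 : ℕ) : ℝ) ≤ 7 * L * (2 * Real.log L + 2) := by gcongr
    linarith
  · intro q hq
    have : n ≤ ⌊Real.exp (2 ^ (j + 1) * x)⌋₊ := by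
      apply Nat.le_floor
      rw [← Real.log_le_iff_le_exp (by exact_mod_cast hn)]
      exact hj2.le
    simp only [Finset.mem_union, Finset.mem_Ioc, Finset.mem_Icc] at hq ⊢
    omega

lemma dushnik (m d : ℕ) (hm : 1 ≤ m) (P : Finset ℕ) (hP : P.card = m ^ 2) (g : Fin d → ℕ → ℝ)
    (h : ∀ i ∈ P, ∀ B ⊆ P, B.card ≤ 2 * m - 2 → i ∉ B → ∃ j, ∀ b ∈ B, g j b < g j i) :
    m ^ 2 - m < d := by
  classical
  by_contra! hd
  have hmm : m ≤ m ^ 2 := by nlinarith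
  have hPne : P.Nonempty := Finset.card_pos.1 (by rw [hP]; omega)
  have ht : ∀ j, ∃ x ∈ P, ∀ y ∈ P, g j y ≤ g j x := fun j => Finset.exists_max_image P (g j) hPne
  choose top htP htop using ht
  have hU : m ≤ (P \ Finset.univ.image top).card := by
    have h1 := Finset.le_card_sdiff (Finset.univ.image top) P
    have h2 : (Finset.univ.image top).card ≤ d := by
      simpa using Finset.card_image_le (s := Finset.univ) (f := top)
    omega
  obtain ⟨U, hUs, hUc⟩ := Finset.exists_subset_card_eq hU
  have hUP : U ⊆ P := hUs.trans Finset.sdiff_subset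
  have hUne : U.Nonempty := Finset.card_pos.1 (by omega)
  have ht : ∀ j, ∃ x ∈ U, ∀ y ∈ U, g j y ≤ g j x := fun j => Finset.exists_max_image U (g j) hUne
  choose ut hutU hut using ht
  obtain ⟨i, hi, hic⟩ := Finset.exists_card_fiber_le_of_card_le_mul (s := (Finset.univ : Finset (Fin d)))
    (t := U) (f := ut) (n := m - 1) hUne (by
      rw [hUc, Finset.card_univ, Fintype.card_fin, Nat.mul_sub, mul_one, ← sq]; exact hd)
  have hiT : ∀ j, top j ≠ i := by
    intro j e
    have := hUs hi
    rw [Finset.mem_sdiff] at this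
    exact this.2 (Finset.mem_image.2 ⟨j, Finset.mem_univ _, e⟩)
  obtain ⟨j, hj⟩ := h i (hUP hi) (U.erase i ∪ (Finset.univ.filter (fun j => ut j = i)).image top)
    (by
      apply Finset.union_subset ((Finset.erase_subset _ _).trans hUP)
      intro y hy
      obtain ⟨j, _, rfl⟩ := Finset.mem_image.1 hy
      exact htP j)
    (by
      refine (Finset.card_union_le _ _).trans ?_
      rw [Finset.card_erase_of_mem hi]
      have := Finset.card_image_le (s := (Finset.univ.filter (fun j => ut j = i))) (f := top)
      omega)
    (by
      simp only [Finset.mem_union, Finset.mem_erase, Finset.mem_image, not_or]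
      refine ⟨by simp, ?_⟩
      rintro ⟨j, _, e⟩
      exact hiT j e)
  by_cases hji : ut j = i
  · have := hj (top j) (Finset.mem_union_right _ (Finset.mem_image_of_mem _ (by simp [hji])))
    exact absurd (htop j i (hUP hi)) (not_le.2 this)
  · have := hj (ut j) (Finset.mem_union_left _ (Finset.mem_erase.2 ⟨hji, hutU j⟩))
    exact absurd (hut j i hi) (not_le.2 this)

lemma lower_main (S : Set ℕ) (n c X m d : ℕ) (hm : 2 ≤ m) (hX : m ^ 2 ≤ Nat.primeCounting X)
    (hS : ∀ y, c ≤ y → y ≤ n → y ∈ S) (hc : 1 ≤ c) (hn : c * X ^ (2 * m - 2) ≤ n)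
    (hd : d ∈ {d : ℕ | ∃ f : ℕ → (Fin d → ℝ), ∀ a ∈ S, ∀ b ∈ S, (f a ≤ f b ↔ a ∣ b)}) :
    m ^ 2 - m < d := by
  obtain ⟨f, hf⟩ := hd
  rw [← Nat.primesLE_card_eq_primeCounting] at hX
  obtain ⟨P, hPs, hPc⟩ := Finset.exists_subset_card_eq hX
  have hpr : ∀ p ∈ P, p.Prime := fun p hp => (Nat.mem_primesLE.1 (hPs hp)).2
  have hle : ∀ p ∈ P, p ≤ X := fun p hp => (Nat.mem_primesLE.1 (hPs hp)).1
  have hPne : P.Nonempty := Finset.card_pos.1 (by rw [hPc]; positivity)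
  have hX1 : 1 ≤ X := by
    obtain ⟨p, hp⟩ := hPne
    exact (hpr p hp).pos.trans_le (hle p hp)
  have hprod : ∀ B ⊆ P, B.card ≤ 2 * m - 2 → c * ∏ p ∈ B, p ∈ S := by
    intro B hB hBc
    apply hS
    · apply Nat.le_mul_of_pos_right
      exact Finset.prod_pos fun p hp => (hpr p (hB hp)).pos
    · refine le_trans (Nat.mul_le_mul_left _ ?_) hn
      exact (Finset.prod_le_pow_card _ _ _ fun p hp => hle p (hB hp)).trans
        (Nat.pow_le_pow_right hX1 hBc)
  have hsing : ∀ p ∈ P, c * p ∈ S := by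
    intro p hp
    have := hprod {p} (by simpa using hp) (by simp; omega)
    simpa using this
  refine dushnik m d (by omega) P hPc (fun j p => f (c * p) j) ?_
  intro i hi B hB hBc hiB
  have hnd : ¬ (c * i ∣ c * ∏ p ∈ B, p) := by
    rw [Nat.mul_dvd_mul_iff_left (by omega)]
    intro h
    rw [(hpr i hi).prime.dvd_finsetProd_iff] at h
    obtain ⟨b, hb, hib⟩ := h
    rw [Nat.prime_dvd_prime_iff_eq (hpr i hi) (hpr b (hB hb))] at hib
    exact hiB (hib ▸ hb)
  rw [← hf _ (hsing i hi) _ (hprod B hB hBc), Pi.le_def] at hnd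
  push Not at hnd
  obtain ⟨j, hj⟩ := hnd
  refine ⟨j, fun b hb => lt_of_le_of_lt ?_ hj⟩
  exact (hf _ (hsing b (hB hb)) _ (hprod B hB hBc)).2
    (Nat.mul_dvd_mul_left _ (Finset.dvd_prod_of_mem _ hb)) j

lemma upper_asymp (y : ℝ) (h1 : 1 ≤ y) (h2 : y / Real.exp (y / 2) ≤ 1 / 3)
    (h3 : y ^ 2 / Real.exp y ≤ 1 / 100) (ε : ℝ) (hε : 0 < ε) :
    Real.exp (3 / 2 * y) + 4 * Real.exp y ^ 2 / (3 / 2 * y) + 7 * Real.exp y * (2 * y + 2)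
      ≤ (4 + ε) * Real.exp y ^ 2 / y := by
  have hy : 0 < y := by linarith
  set E := Real.exp (y / 2) with hE
  have hE0 : 0 < E := Real.exp_pos _
  have e1 : Real.exp y = E ^ 2 := by rw [hE, ← Real.exp_nat_mul]; congr 1; push_cast; ring
  have e2 : Real.exp (3 / 2 * y) = E ^ 3 := by
    rw [hE, ← Real.exp_nat_mul]; congr 1; push_cast; ring
  rw [e1] at h3
  rw [e1, e2]
  rw [div_le_iff₀ (by positivity)] at h2 h3
  rw [le_div_iff₀ hy]
  have e3 : (E ^ 3 + 4 * (E ^ 2) ^ 2 / (3 / 2 * y) + 7 * E ^ 2 * (2 * y + 2)) * y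
      = E ^ 3 * y + 8 / 3 * E ^ 4 + 7 * E ^ 2 * (2 * y ^ 2 + 2 * y) := by
    field_simp; ring
  rw [e3]
  have f1 : E ^ 3 * y ≤ E ^ 3 * (1 / 3 * E) := by gcongr
  have f2 : 7 * E ^ 2 * (2 * y ^ 2 + 2 * y) ≤ 7 * E ^ 2 * (4 * (1 / 100 * E ^ 2)) := by
    gcongr; nlinarith
  nlinarith [mul_pos hε (pow_pos hE0 4), pow_pos hE0 4]

lemma pi_asymp (y : ℝ) (h1 : 1 ≤ y) (h2 : y ^ 2 / Real.exp y ≤ 1 / 100) :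
    Real.exp y ^ 2 / (16 * y ^ 2) ≤ (Nat.primeCounting ⌊Real.exp y ^ 2⌋₊ : ℝ) := by
  have hy : 0 < y := by linarith
  have hE : 0 < Real.exp y := Real.exp_pos _
  rw [div_le_iff₀ hE] at h2
  set x := Real.exp y ^ 2 with hx
  have hE100 : 100 * y ≤ Real.exp y := by nlinarith
  have hxE : 100 * Real.exp y ≤ x := by nlinarith
  have hx1 : 10000 ≤ x := by nlinarith
  have hlx : Real.log x = 2 * y := by rw [hx, Real.log_pow, Real.log_exp]; norm_num
  refine le_trans ?_ (Chebyshev.pi_ge' (x := x) (by linarith))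
  rw [hlx]
  have hl : Real.log (x + 2) ≤ 2 * y + 1 := by
    rw [Real.log_le_iff_le_exp (by linarith), Real.exp_add]
    have : Real.exp (2 * y) = x := by rw [← hlx, Real.exp_log (by linarith)]
    rw [this]
    nlinarith [Real.exp_one_gt_d9]
  have h5 := Real.log_two_gt_d9
  rw [div_le_div_iff₀ (by positivity) (by positivity)]
  have h6 : x * (1 / 8) ≤ (x - 1) * Real.log 2 - Real.log (x + 2) := by nlinarith
  have h8 : x * y ≤ x * y ^ 2 := by gcongr; nlinarith
  have h7 : x * (2 * y) ≤ x * (1 / 8) * (16 * y ^ 2) := by linarith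
  exact h7.trans (by gcongr)

lemma lower_asymp (β z ε m : ℝ) (hz0 : 0 < z) (hβ : β ≤ 1) (h4 : 2 ≤ z * ε)
    (h5 : 16 ≤ z * β) (hms : β * z / 4 - 2 ≤ m) : (β ^ 2 / 16 - ε) * z ^ 2 ≤ m ^ 2 - m := by
  obtain ⟨s, hs⟩ : ∃ s, s = β * z / 4 - 2 := ⟨_, rfl⟩
  rw [← hs] at hms
  have hs2 : 2 ≤ s := by rw [hs]; linarith
  have f1 : s ^ 2 - s ≤ m ^ 2 - m := by nlinarith
  refine le_trans ?_ f1
  have f2 : 2 * z ≤ ε * z ^ 2 := by nlinarith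
  have f3 : β * z ≤ z := by nlinarith
  rw [hs]
  nlinarith

set_option maxHeartbeats 1000000 in
theorem divDim_Ioc_rpow_bounds (α : ℝ) (hα0 : 0 < α) (hα1 : α < 1) :
    ∀ ε : ℝ, 0 < ε → ∃ N : ℕ, ∀ n : ℕ, N ≤ n →
      ((1 - α) ^ 2 / 16 - ε) * (Real.log n) ^ 2 / (Real.log (Real.log n)) ^ 2
          ≤ (divDim {m : ℕ | (n : ℝ) ^ α < (m : ℝ) ∧ m ≤ n} : ℝ) ∧
        (divDim {m : ℕ | (n : ℝ) ^ α < (m : ℝ) ∧ m ≤ n} : ℝ)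
          ≤ (4 + ε) * (Real.log n) ^ 2 / Real.log (Real.log n) := by
  intro ε hε
  have hβ : 0 < 1 - α := by linarith
  have T0 : Filter.Tendsto (fun n : ℕ => Real.log (Real.log n)) Filter.atTop Filter.atTop :=
    Real.tendsto_log_atTop.comp (Real.tendsto_log_atTop.comp tendsto_natCast_atTop_atTop)
  have T1 : Filter.Tendsto (fun y : ℝ => y / Real.exp (y / 2)) Filter.atTop (nhds 0) := by
    have h := (Real.tendsto_pow_mul_exp_neg_atTop_nhds_zero 1).comp
      (Filter.tendsto_id.atTop_div_const (two_pos : (0:ℝ) < 2))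
    have h' := h.const_mul 2
    simp only [mul_zero] at h'
    refine h'.congr fun y => ?_
    simp only [Function.comp, id, Real.exp_neg]
    field_simp
  have T2 : Filter.Tendsto (fun y : ℝ => y ^ 2 / Real.exp y) Filter.atTop (nhds 0) := by
    refine (Real.tendsto_pow_mul_exp_neg_atTop_nhds_zero 2).congr fun y => ?_
    rw [Real.exp_neg]; rfl
  have T3 : Filter.Tendsto (fun y : ℝ => Real.exp y / y) Filter.atTop Filter.atTop := by
    simpa using Real.tendsto_exp_div_pow_atTop 1
  have E1 := T0.eventually (Filter.eventually_ge_atTop (1 : ℝ))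
  have E2 := T0.eventually (T1.eventually (ge_mem_nhds (show (0 : ℝ) < 1 / 3 by norm_num)))
  have E3 := T0.eventually (T2.eventually (ge_mem_nhds (show (0 : ℝ) < 1 / 100 by norm_num)))
  have E4 := T0.eventually (T3.eventually (Filter.eventually_ge_atTop (2 / ε)))
  have E5 := T0.eventually (T3.eventually (Filter.eventually_ge_atTop (16 / (1 - α))))
  have E6 := (Real.tendsto_log_atTop.comp tendsto_natCast_atTop_atTop).eventually
    (Filter.eventually_ge_atTop (1 : ℝ))
  obtain ⟨N, hN⟩ := Filter.eventually_atTop.1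
    (((((E1.and E2).and E3).and E4).and E5).and (E6.and (Filter.eventually_ge_atTop 1)))
  refine ⟨N, fun n hn => ?_⟩
  obtain ⟨⟨⟨⟨⟨h1, h2⟩, h3⟩, h4⟩, h5⟩, h6, hn1⟩ := hN n hn
  simp only [Function.comp] at h6
  set S : Set ℕ := {m : ℕ | (n : ℝ) ^ α < (m : ℝ) ∧ m ≤ n} with hS
  set L := Real.log n with hL
  set y := Real.log L with hy
  have hLy : L = Real.exp y := by rw [hy, Real.exp_log (by linarith)]
  have hy0 : 0 < y := by linarith
  have hnpos : (0 : ℝ) < n := by exact_mod_cast hn1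
  have hnexp : (n : ℝ) = Real.exp L := by rw [hL, Real.exp_log hnpos]
  have hSn : ∀ m ∈ S, 1 ≤ m ∧ m ≤ n := by
    intro m hm
    refine ⟨?_, hm.2⟩
    have : (0 : ℝ) < m := lt_of_le_of_lt (by positivity) hm.1
    exact_mod_cast this
  have hEy : 100 * y ≤ Real.exp y := by
    have := (div_le_iff₀ (Real.exp_pos y)).1 h3
    nlinarith
  obtain ⟨d, hd, hdm⟩ := upper_main n S hSn (3 / 2 * y) (by linarith) hn1
    (by rw [← hL, hLy]; linarith)
  have hmem : divDim S ∈ {d : ℕ | ∃ f : ℕ → (Fin d → ℝ), ∀ a ∈ S, ∀ b ∈ S, (f a ≤ f b ↔ a ∣ b)} :=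
    Nat.sInf_mem ⟨d, hdm⟩
  have hle : divDim S ≤ d := Nat.sInf_le hdm
  constructor
  · set z := Real.exp y / y with hz
    have hzy : L = z * y := by rw [hz, hLy]; field_simp
    have hz0 : 0 < z := by positivity
    rw [div_le_iff₀ hε] at h4
    rw [div_le_iff₀ hβ] at h5
    set w := ((1 - α) * L - 1) / (4 * y) with hw
    have hw1 : (1 - α) * z / 4 - 1 ≤ w := by
      rw [hw, le_div_iff₀ (by positivity), hzy]
      nlinarith
    have hw2 : w ≤ L / (4 * y) := by
      rw [hw]; gcongr; nlinarith
    have hw0 : 0 ≤ w := by nlinarith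
    set m := ⌊w⌋₊ with hm
    have hmw : (m : ℝ) ≤ w := Nat.floor_le hw0
    have hmw' : w < m + 1 := Nat.lt_floor_add_one w
    have hms : (1 - α) * z / 4 - 2 ≤ m := by linarith
    have hm2 : 2 ≤ m := by
      have : (2 : ℝ) ≤ m := by nlinarith
      exact_mod_cast this
    have hXpos : 0 ≤ Real.exp y ^ 2 := by positivity
    have hlow := lower_main S n (⌊(n : ℝ) ^ α⌋₊ + 1) ⌊Real.exp y ^ 2⌋₊ m (divDim S) hm2 (by
        have hp := pi_asymp y h1 h3
        have : (m : ℝ) ^ 2 ≤ (Nat.primeCounting ⌊Real.exp y ^ 2⌋₊ : ℝ) := by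
          refine le_trans ?_ hp
          calc (m : ℝ) ^ 2 ≤ (L / (4 * y)) ^ 2 := by gcongr; exact hmw.trans hw2
            _ = _ := by rw [hLy]; field_simp; norm_num
        exact_mod_cast this) (by
        intro x hx hxn
        refine ⟨?_, hxn⟩
        have : ((⌊(n : ℝ) ^ α⌋₊ + 1 : ℕ) : ℝ) ≤ x := by exact_mod_cast hx
        push_cast at this
        exact lt_of_lt_of_le (Nat.lt_floor_add_one _) this) (by omega) (by
        have hna : (n : ℝ) ^ α = Real.exp (α * L) := by
          rw [hnexp, ← Real.exp_mul]; congr 1; ring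
        have a1 : ((⌊(n : ℝ) ^ α⌋₊ : ℝ) + 1) ≤ 2 * Real.exp (α * L) := by
          have := Nat.floor_le (a := (n : ℝ) ^ α) (by positivity)
          have h1 : (1 : ℝ) ≤ Real.exp (α * L) := Real.one_le_exp (by positivity)
          linarith
        have a2 : ((⌊Real.exp y ^ 2⌋₊ : ℝ)) ^ (2 * m - 2) ≤ Real.exp ((1 - α) * L - 1) := by
          calc ((⌊Real.exp y ^ 2⌋₊ : ℝ)) ^ (2 * m - 2) ≤ (Real.exp y ^ 2) ^ (2 * m - 2) := by
                gcongr; exact Nat.floor_le hXpos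
            _ ≤ (Real.exp y ^ 2) ^ (2 * m) := by
                apply pow_le_pow_right₀
                · exact one_le_pow₀ (Real.one_le_exp hy0.le)
                · omega
            _ = Real.exp (m * (4 * y)) := by
                rw [← pow_mul, ← Real.exp_nat_mul]; congr 1; push_cast; ring
            _ ≤ _ := by
                rw [Real.exp_le_exp, ← le_div_iff₀ (by positivity)]
                exact hmw
        have a3 : ((⌊(n : ℝ) ^ α⌋₊ : ℝ) + 1) * ((⌊Real.exp y ^ 2⌋₊ : ℝ)) ^ (2 * m - 2) ≤ n := by
          calc _ ≤ 2 * Real.exp (α * L) * Real.exp ((1 - α) * L - 1) := by gcongr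
            _ = 2 * Real.exp (L - 1) := by
                rw [mul_assoc, ← Real.exp_add]; congr 2; ring
            _ ≤ Real.exp 1 * Real.exp (L - 1) := by
                gcongr; linarith [Real.exp_one_gt_d9]
            _ = n := by rw [← Real.exp_add, hnexp]; congr 1; ring
        exact_mod_cast a3) hmem
    have hlow' : (m : ℝ) ^ 2 - m ≤ divDim S := by
      have : m ^ 2 ≤ divDim S + m := by omega
      have : (m : ℝ) ^ 2 ≤ divDim S + m := by exact_mod_cast this
      linarith
    refine le_trans ?_ hlow'
    have e1 : ((1 - α) ^ 2 / 16 - ε) * L ^ 2 / y ^ 2 = ((1 - α) ^ 2 / 16 - ε) * z ^ 2 := by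
      rw [hzy]; field_simp
    rw [e1]
    exact lower_asymp (1 - α) z ε m hz0 (by linarith) h4 h5 hms
  · refine le_trans (Nat.cast_le.2 hle) (hd.trans ?_)
    have := upper_asymp y h1 h2 h3 ε hε
    rw [← hL, ← hy]
    rw [← hLy] at this
    exact this
end

section
/- Fix positive integers a and b. For every ε > 0 there exists N such that for all n ≥ N, the Dushnik–Miller dimension of the divisibility poset on the arithmetic progression a[n] + b = {ak + b : k ∈ {1,…,n}} satisfies (1/16 − ε)·(log n)²/(log log n)² ≤ dim(D_{a[n]+b}) ≤ (4 + ε)·(log n)²/(log log n). -/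
lemma greedy_cover_s12 {Ω U : Type*} [Fintype Ω] [Nonempty Ω] (A : Finset U) (R : Ω → U → Prop)
    (δ : ℝ) (h : ∀ u ∈ A, δ * Fintype.card Ω ≤ (({ω | R ω u} : Set Ω).ncard : ℝ)) (hδ : δ ≤ 1) (t : ℕ) :
    ∃ s : Fin t → Ω, (({u | u ∈ A ∧ ∀ i, ¬ R (s i) u} : Set U).ncard : ℝ) ≤ (1 - δ) ^ t * A.card := by
  classical
  induction t with
  | zero =>
    refine ⟨Fin.elim0, ?_⟩
    simp
  | succ t ih =>
    obtain ⟨s, hs⟩ := ih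
    set V : Finset U := A.filter (fun u => ∀ i, ¬ R (s i) u) with hV
    have hVs : ({u | u ∈ A ∧ ∀ i, ¬ R (s i) u} : Set U) = (V : Set U) := by
      ext u; simp [hV]
    rw [hVs, Set.ncard_coe_finset] at hs
    have key : ∑ ω : Ω, ((V.filter (fun u => ¬ R ω u)).card : ℝ) ≤ ∑ ω : Ω, (1 - δ) * (V.card : ℝ) := by
      have e1 : ∑ ω : Ω, ((V.filter (fun u => ¬ R ω u)).card : ℝ)
          = ∑ u ∈ V, ((Finset.univ.filter (fun ω => ¬ R ω u)).card : ℝ) := by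
        have := Finset.sum_card_bipartiteAbove_eq_sum_card_bipartiteBelow (s := (Finset.univ : Finset Ω)) (t := V) (fun ω u => ¬ R ω u)
        simp only [Finset.bipartiteAbove, Finset.bipartiteBelow] at this
        exact_mod_cast this
      rw [e1]
      have : ∀ u ∈ V, ((Finset.univ.filter (fun ω => ¬ R ω u)).card : ℝ) ≤ (1 - δ) * Fintype.card Ω := by
        intro u hu
        have h1 := h u (Finset.mem_filter.1 hu).1
        have h2 : ({ω | R ω u} : Set Ω).ncard = (Finset.univ.filter (fun ω => R ω u)).card := by
          rw [← Set.ncard_coe_finset]; simp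
        rw [h2] at h1
        have h3 := Finset.card_filter_add_card_filter_not (s := (Finset.univ : Finset Ω)) (fun ω => R ω u)
        rw [Finset.card_univ] at h3
        have h4 : ((Finset.univ.filter (fun ω => R ω u)).card : ℝ) + (Finset.univ.filter (fun ω => ¬ R ω u)).card = Fintype.card Ω := by
          exact_mod_cast h3
        linarith
      refine (Finset.sum_le_sum this).trans ?_
      simp
      linarith
    obtain ⟨ω, -, hω⟩ := Finset.exists_le_of_sum_le (Finset.univ_nonempty) key
    refine ⟨Fin.cons ω s, ?_⟩
    have : ({u | u ∈ A ∧ ∀ i, ¬ R ((Fin.cons ω s : Fin (t+1) → Ω) i) u} : Set U) = ((V.filter (fun u => ¬ R ω u) : Finset U) : Set U) := by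
      ext u
      simp [hV, Fin.forall_fin_succ]
      tauto
    rw [this, Set.ncard_coe_finset]
    refine hω.trans ?_
    rw [pow_succ]
    nlinarith [sub_nonneg.2 hδ]

lemma perm_count_s12 (Z r : ℕ) (p : Fin Z) (g : Fin r → Fin Z) (hp : ∀ j, g j ≠ p) :
    Fintype.card (Equiv.Perm (Fin Z)) ≤
      (r + 1) * ({σ | ∀ j, σ (g j) < σ p} : Set (Equiv.Perm (Fin Z))).ncard := by
  classical
  let e : Option (Fin r) → Fin Z := fun o => o.elim p g
  let B : Option (Fin r) → Finset (Equiv.Perm (Fin Z)) := fun i =>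
    Finset.univ.filter (fun σ => ∀ i', σ (e i') ≤ σ (e i))
  let T : Finset (Equiv.Perm (Fin Z)) := Finset.univ.filter (fun σ => ∀ j, σ (g j) < σ p)
  have hT : ({σ | ∀ j, σ (g j) < σ p} : Set (Equiv.Perm (Fin Z))).ncard = T.card := by
    rw [← Set.ncard_coe_finset]; simp [T]
  rw [hT]
  have h1 : (Finset.univ : Finset (Equiv.Perm (Fin Z))) ⊆ Finset.univ.biUnion B := by
    intro σ _
    obtain ⟨i, hi⟩ := Finite.exists_max (fun i => σ (e i))
    simp only [Finset.mem_biUnion, Finset.mem_univ, true_and, B, Finset.mem_filter]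
    exact ⟨i, hi⟩
  have h2 : ∀ i ∈ (Finset.univ : Finset (Option (Fin r))), (B i).card ≤ T.card := by
    intro i _
    apply Finset.card_le_card_of_injOn (fun σ => σ * Equiv.swap p (e i))
    · intro σ hσ
      simp only [B, Finset.coe_filter, Finset.mem_univ, true_and, Set.mem_ofPred_eq] at hσ
      simp only [T, Finset.coe_filter, Finset.mem_univ, true_and, Set.mem_ofPred_eq, Equiv.Perm.mul_apply, Equiv.swap_apply_left]
      intro j
      apply lt_of_le_of_ne
      · by_cases hj : g j = e i
        · rw [hj, Equiv.swap_apply_right]; exact hσ none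
        · rw [Equiv.swap_apply_of_ne_of_ne (hp j) hj]; exact hσ (some j)
      · intro h
        have := σ.injective h
        rw [Equiv.swap_apply_eq_iff, Equiv.swap_apply_right] at this
        exact hp j this
    · intro σ _ τ _ h
      exact mul_right_cancel h
  have := (Finset.card_le_card h1).trans (Finset.card_biUnion_le_card_mul _ _ _ h2)
  simpa using this

lemma dushnik_s12 {α : Type*} [DecidableEq α] (M : Finset α) (d s : ℕ) (g : Fin d → α → ℝ) (hs : 1 ≤ s)
    (hM : d + s ≤ M.card) :
    ∃ i ∈ M, ∃ S ⊆ M, i ∉ S ∧ s ≤ S.card + 1 ∧ S.card ≤ s - 1 + d / s ∧ ∀ t, ∃ j ∈ S, g t i ≤ g t j := by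
  have hne : M.Nonempty := by rw [← Finset.card_pos]; omega
  have : ∀ t, ∃ x ∈ M, ∀ y ∈ M, g t y ≤ g t x := fun t => Finset.exists_max_image M (g t) hne
  choose τ hτM hτ using this
  have hA : s ≤ (M \ Finset.univ.image τ).card := by
    have h1 := Finset.le_card_sdiff (Finset.univ.image τ) M
    have h2 : (Finset.univ.image τ).card ≤ d := by simpa using Finset.card_image_le (s := (Finset.univ : Finset (Fin d))) (f := τ)
    omega
  obtain ⟨A, hAs, hAc⟩ := Finset.exists_subset_card_eq hA
  have hAne : A.Nonempty := by rw [← Finset.card_pos]; omega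
  have : ∀ t, ∃ x ∈ A, ∀ y ∈ A, g t y ≤ g t x := fun t => Finset.exists_max_image A (g t) hAne
  choose top htA htop using this
  have : ∃ i ∈ A, (Finset.univ.filter (fun t => top t = i)).card ≤ d / s := by
    by_contra hcon
    push Not at hcon
    have h1 : (Finset.univ : Finset (Fin d)).card = ∑ i ∈ A, (Finset.univ.filter (fun t => top t = i)).card :=
      Finset.card_eq_sum_card_fiberwise (fun t _ => htA t)
    have h2 : ∑ i ∈ A, (d / s + 1) ≤ ∑ i ∈ A, (Finset.univ.filter (fun t => top t = i)).card :=
      Finset.sum_le_sum (fun i hi => hcon i hi)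
    rw [← h1] at h2
    simp [hAc] at h2
    have := Nat.lt_mul_div_succ d (show 0 < s by omega)
    omega
  obtain ⟨i, hiA, hi⟩ := this
  have hAM : A ⊆ M := hAs.trans Finset.sdiff_subset
  refine ⟨i, hAM hiA, A.erase i ∪ (Finset.univ.filter (fun t => top t = i)).image τ, ?_, ?_, ?_, ?_, ?_⟩
  · apply Finset.union_subset ((Finset.erase_subset _ _).trans hAM)
    intro x hx
    obtain ⟨t, -, rfl⟩ := Finset.mem_image.1 hx
    exact hτM t
  · intro h
    rcases Finset.mem_union.1 h with h | h
    · simp at h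
    · obtain ⟨t, -, ht⟩ := Finset.mem_image.1 h
      have := (Finset.mem_sdiff.1 (hAs hiA)).2
      exact this (Finset.mem_image.2 ⟨t, Finset.mem_univ _, ht⟩)
  · have := Finset.card_le_card (Finset.subset_union_left (s₁ := A.erase i) (s₂ := (Finset.univ.filter (fun t => top t = i)).image τ))
    rw [Finset.card_erase_of_mem hiA] at this
    omega
  · have h1 := Finset.card_union_le (A.erase i) ((Finset.univ.filter (fun t => top t = i)).image τ)
    have h2 := Finset.card_image_le (s := Finset.univ.filter (fun t => top t = i)) (f := τ)
    rw [Finset.card_erase_of_mem hiA] at h1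
    omega
  · intro t
    by_cases h : top t = i
    · exact ⟨τ t, Finset.mem_union_right _ (Finset.mem_image.2 ⟨t, by simp [h], rfl⟩), hτ t i (hAM hiA)⟩
    · exact ⟨top t, Finset.mem_union_left _ (Finset.mem_erase.2 ⟨h, htA t⟩), htop t i hiA⟩

lemma exists_perms (Z r : ℕ) (hZ : 1 ≤ Z) : ∃ t : ℕ, (t : ℝ) ≤ (r + 1) ^ 2 * Real.log Z + 1 ∧
    ∃ σ : Fin t → Equiv.Perm (Fin Z), ∀ (p : Fin Z) (g : Fin r → Fin Z), (∀ j, g j ≠ p) →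
      ∃ i, ∀ j, σ i (g j) < σ i p := by
  classical
  have hlog : 0 ≤ Real.log Z := Real.log_nonneg (by exact_mod_cast hZ)
  refine ⟨⌊((r:ℝ) + 1) ^ 2 * Real.log Z⌋₊ + 1, ?_, ?_⟩
  · push_cast
    gcongr
    exact Nat.floor_le (by positivity)
  set t := ⌊((r:ℝ) + 1) ^ 2 * Real.log Z⌋₊ + 1 with ht
  have ht' : ((r:ℝ) + 1) ^ 2 * Real.log Z < t := by
    rw [ht]; push_cast; exact Nat.lt_floor_add_one _
  let A : Finset (Fin Z × (Fin r → Fin Z)) := Finset.univ.filter (fun u => ∀ j, u.2 j ≠ u.1)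
  let R : Equiv.Perm (Fin Z) → Fin Z × (Fin r → Fin Z) → Prop := fun σ u => ∀ j, σ (u.2 j) < σ u.1
  have hr : (0:ℝ) < r + 1 := by positivity
  obtain ⟨σ, hσ⟩ := greedy_cover_s12 A R (1 / (r + 1)) (by
    intro u hu
    have h1 := perm_count_s12 Z r u.1 u.2 (Finset.mem_filter.1 hu).2
    have h2 : (Fintype.card (Equiv.Perm (Fin Z)) : ℝ) ≤ (r + 1) * (({σ | R σ u} : Set (Equiv.Perm (Fin Z))).ncard : ℝ) := by
      exact_mod_cast h1
    rw [one_div, inv_mul_le_iff₀ hr]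
    exact h2) (by rw [div_le_one hr]; linarith [(Nat.cast_nonneg r : (0:ℝ) ≤ r)]) t
  refine ⟨σ, fun p g hg => ?_⟩
  have hlt : (({u | u ∈ A ∧ ∀ i, ¬ R (σ i) u} : Set (Fin Z × (Fin r → Fin Z))).ncard : ℝ) < 1 := by
    refine hσ.trans_lt ?_
    have hA : (A.card : ℝ) ≤ (Z:ℝ) ^ (r + 1) := by
      have : A.card ≤ Z ^ (r + 1) := by
        refine (Finset.card_le_univ A).trans ?_
        simp [pow_succ, mul_comm]
      exact_mod_cast this
    have h0 : (0:ℝ) ≤ 1 - 1 / (r + 1) := by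
      rw [sub_nonneg, div_le_one hr]; linarith [(Nat.cast_nonneg r : (0:ℝ) ≤ r)]
    have h1 : (1 - 1 / ((r:ℝ) + 1)) ^ t ≤ Real.exp (-(t / (r + 1))) := by
      have : 1 - 1 / ((r:ℝ) + 1) ≤ Real.exp (-(1 / (r + 1))) := by
        have := Real.add_one_le_exp (-(1 / ((r:ℝ) + 1))); linarith
      refine (pow_le_pow_left₀ h0 this t).trans (le_of_eq ?_)
      rw [← Real.exp_nat_mul]; congr 1; ring
    have hZ0 : (0:ℝ) < Z := by exact_mod_cast hZ
    have h2 : (Z:ℝ) ^ (r + 1) = Real.exp ((r + 1) * Real.log Z) := by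
      conv_lhs => rw [← Real.exp_log hZ0]
      rw [← Real.exp_nat_mul]; push_cast; rfl
    calc (1 - 1 / ((r:ℝ) + 1)) ^ t * A.card ≤ Real.exp (-(t / (r + 1))) * Real.exp ((r + 1) * Real.log Z) := by
          rw [← h2]; gcongr
      _ < 1 := by
        rw [← Real.exp_add, Real.exp_lt_one_iff]
        have : (r + 1) * Real.log Z < t / ((r:ℝ) + 1) := by
          rw [lt_div_iff₀ hr]; nlinarith
        linarith
  have h0 : ({u | u ∈ A ∧ ∀ i, ¬ R (σ i) u} : Set (Fin Z × (Fin r → Fin Z))).ncard = 0 := by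
    have : ({u | u ∈ A ∧ ∀ i, ¬ R (σ i) u} : Set (Fin Z × (Fin r → Fin Z))).ncard < 1 := by exact_mod_cast hlt
    omega
  rw [Set.ncard_eq_zero (Set.toFinite _)] at h0
  by_contra hcon
  push Not at hcon
  have : (p, g) ∈ ({u | u ∈ A ∧ ∀ i, ¬ R (σ i) u} : Set (Fin Z × (Fin r → Fin Z))) := by
    refine ⟨by simp [A]; exact hg, fun i h => ?_⟩
    obtain ⟨j, hj⟩ := hcon i
    exact absurd (h j) (not_lt.2 hj)
  rw [h0] at this
  exact this

lemma exists_enum {Z r : ℕ} (S : Finset (Fin Z)) (p d : Fin Z) (hd : d ≠ p) (hp : p ∉ S) (hS : S.card ≤ r) :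
    ∃ g : Fin r → Fin Z, (∀ j, g j ≠ p) ∧ ∀ q ∈ S, ∃ j, g j = q := by
  refine ⟨fun j => S.toList.getD j d, fun j => ?_, fun q hq => ?_⟩
  · by_cases h : (j : ℕ) < S.toList.length
    · simp only [List.getD_eq_getElem _ _ h]
      intro h'
      exact hp (h' ▸ Finset.mem_toList.1 (List.getElem_mem h))
    · simp only [List.getD_eq_default _ _ (not_lt.1 h)]
      exact hd
  · obtain ⟨k, hk, h⟩ := List.mem_iff_getElem.1 (Finset.mem_toList.2 hq)
    refine ⟨⟨k, ?_⟩, ?_⟩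
    · rw [Finset.length_toList] at hk; omega
    · simp only [List.getD_eq_getElem _ _ hk]; exact h

lemma layer (N y z r : ℕ) (hy : 2 ≤ y) (hz : 1 ≤ z) (hr : N < y ^ (r + 1)) :
    ∃ t : ℕ, (t : ℝ) ≤ (r + 1) ^ 2 * Real.log z + 1 ∧ ∃ F : Fin t → ℕ → ℝ,
      (∀ i x x', x' ≠ 0 → x ∣ x' → F i x ≤ F i x') ∧
      (∀ x x' p, x' ≠ 0 → x' ≤ N → y ≤ p → p < z → x'.factorization p < x.factorization p →
        ∃ i, F i x' < F i x) := by
  classical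
  obtain ⟨t, ht, σ, hσ⟩ := exists_perms z r hz
  let B : ℕ := z * N + 1
  let Q : Finset (Fin z) := Finset.univ.filter (fun q => y ≤ (q : ℕ))
  let G : Fin t → ℕ → ℕ := fun i x => ∑ q ∈ Q, x.factorization q * B ^ (σ i q : ℕ)
  refine ⟨t, ht, fun i x => (G i x : ℝ), ?_, ?_⟩
  · intro i x x' h0 hd
    have hx0 : x ≠ 0 := fun h => h0 (by simpa [h] using hd)
    have := (Nat.factorization_le_iff_dvd hx0 h0).2 hd
    have : G i x ≤ G i x' := by
      apply Finset.sum_le_sum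
      intro q _
      exact Nat.mul_le_mul_right _ (this q)
    exact Nat.cast_le.2 this
  · intro x x' p h0 hN hyp hpz hv
    let P : Fin z := ⟨p, hpz⟩
    let S : Finset (Fin z) := (Q.erase P).filter (fun q => x'.factorization q ≠ 0)
    have hSr : S.card ≤ r := by
      let S' : Finset ℕ := S.image Fin.val
      have hc : S'.card = S.card := Finset.card_image_of_injective _ Fin.val_injective
      have hsub : S' ⊆ x'.primeFactors := by
        intro q hq
        obtain ⟨q', hq', rfl⟩ := Finset.mem_image.1 hq
        rw [← Nat.support_factorization, Finsupp.mem_support_iff]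
        exact (Finset.mem_filter.1 hq').2
      have h1 : y ^ S'.card ≤ ∏ q ∈ S', q := by
        apply Finset.pow_card_le_prod
        intro q hq
        obtain ⟨q', hq', rfl⟩ := Finset.mem_image.1 hq
        exact (Finset.mem_filter.1 (Finset.mem_of_mem_erase (Finset.mem_filter.1 hq').1)).2
      have h2 : ∏ q ∈ S', q ∣ x' :=
        (Finset.prod_dvd_prod_of_subset _ _ _ hsub).trans (Nat.prod_primeFactors_dvd x')
      have h3 := Nat.le_of_dvd (Nat.pos_of_ne_zero h0) h2
      have h4 : y ^ S'.card < y ^ (r + 1) := by omega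
      have := (Nat.pow_lt_pow_iff_right (by omega : 1 < y)).1 h4
      omega
    obtain ⟨g, hg1, hg2⟩ := exists_enum S P ⟨0, hz⟩ (by simp [P, Fin.ext_iff]; omega) (by simp [S]) hSr
    obtain ⟨i, hi⟩ := hσ P g hg1
    refine ⟨i, ?_⟩
    have hPQ : P ∈ Q := by simp [Q, P, hyp]
    have hsum : ∑ q ∈ Q.erase P, x'.factorization q * B ^ (σ i q : ℕ) < B ^ (σ i P : ℕ) := by
      by_cases hs0 : (σ i P : ℕ) = 0
      · have : ∀ q ∈ Q.erase P, x'.factorization q * B ^ (σ i q : ℕ) = 0 := by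
          intro q hq
          by_cases hq0 : x'.factorization q = 0
          · simp [hq0]
          · obtain ⟨j, hj⟩ := hg2 q (Finset.mem_filter.2 ⟨hq, hq0⟩)
            have := hi j
            rw [Fin.lt_def] at this
            omega
        rw [Finset.sum_eq_zero this]
        simp [hs0]
      · have hle : ∀ q ∈ Q.erase P, x'.factorization q * B ^ (σ i q : ℕ) ≤ N * B ^ ((σ i P : ℕ) - 1) := by
          intro q hq
          by_cases hq0 : x'.factorization q = 0
          · simp [hq0]
          · obtain ⟨j, hj⟩ := hg2 q (Finset.mem_filter.2 ⟨hq, hq0⟩)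
            have h1 := hi j
            rw [Fin.lt_def, hj] at h1
            have h2 := Nat.factorization_lt (q : ℕ) h0
            apply Nat.mul_le_mul (by omega)
            apply Nat.pow_le_pow_right (by omega) (by omega)
        refine (Finset.sum_le_card_nsmul _ _ _ hle).trans_lt ?_
        have hc : (Q.erase P).card ≤ z := by
          simpa using Finset.card_le_univ (Q.erase P)
        have hB : 0 < B ^ ((σ i P : ℕ) - 1) := Nat.pow_pos (by omega)
        calc (Q.erase P).card • (N * B ^ ((σ i P : ℕ) - 1)) ≤ z * (N * B ^ ((σ i P : ℕ) - 1)) := by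
              rw [smul_eq_mul]; exact Nat.mul_le_mul_right _ hc
          _ = (z * N) * B ^ ((σ i P : ℕ) - 1) := by ring
          _ < B * B ^ ((σ i P : ℕ) - 1) := Nat.mul_lt_mul_of_pos_right (by omega) hB
          _ = B ^ (σ i P : ℕ) := by rw [← pow_succ']; congr 1; omega
    have hlt : G i x' < G i x := by
      calc G i x' = x'.factorization P * B ^ (σ i P : ℕ) + ∑ q ∈ Q.erase P, x'.factorization q * B ^ (σ i q : ℕ) :=
            (Finset.add_sum_erase Q (fun q : Fin z => x'.factorization q * B ^ (σ i q : ℕ)) hPQ).symm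
        _ < x'.factorization P * B ^ (σ i P : ℕ) + B ^ (σ i P : ℕ) := by omega
        _ = (x'.factorization P + 1) * B ^ (σ i P : ℕ) := by ring
        _ ≤ x.factorization P * B ^ (σ i P : ℕ) := Nat.mul_le_mul_right _ hv
        _ ≤ G i x := Finset.single_le_sum (f := fun q : Fin z => x.factorization q * B ^ (σ i q : ℕ)) (fun _ _ => Nat.zero_le _) hPQ
    exact Nat.cast_lt.2 hlt

lemma find_layer (y p J : ℕ) (hyp : y ≤ p) (hpN : p < y ^ 2 ^ J) :
    ∃ j < J, y ^ 2 ^ j ≤ p ∧ p < y ^ 2 ^ (j + 1) := by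
  induction J with
  | zero => simp at hpN; omega
  | succ J ih =>
    by_cases h' : p < y ^ 2 ^ J
    · obtain ⟨j, hj, h⟩ := ih h'
      exact ⟨j, by omega, h⟩
    · exact ⟨J, by omega, by omega, hpN⟩

lemma upper_emb (N y J : ℕ) (hy : 2 ≤ y) (hJ : N < y ^ (2 ^ J)) (S : Set ℕ) (hS : ∀ x ∈ S, x ≠ 0 ∧ x ≤ N) :
    ∃ d : ℕ, (d : ℝ) ≤ y + ∑ j ∈ Finset.range J,
        (((Nat.log (y ^ 2 ^ j) N : ℝ) + 1) ^ 2 * Real.log ((y ^ 2 ^ (j + 1) : ℕ) : ℝ) + 1) ∧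
      ∃ f : ℕ → (Fin d → ℝ), ∀ a ∈ S, ∀ b ∈ S, (f a ≤ f b ↔ a ∣ b) := by
  have hyj : ∀ j, 2 ≤ y ^ 2 ^ j := fun j => hy.trans (Nat.le_self_pow (by positivity) y)
  have := fun j : ℕ => layer N (y ^ 2 ^ j) (y ^ 2 ^ (j + 1)) (Nat.log (y ^ 2 ^ j) N) (hyj j)
    (by linarith [hyj (j + 1)]) (Nat.lt_pow_succ_log_self (by linarith [hyj j]) N)
  choose t ht F hF1 hF2 using this
  let ι := Fin y ⊕ (Σ j : Fin J, Fin (t j))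
  let f : ℕ → ι → ℝ := fun x => Sum.elim (fun q => (x.factorization q : ℝ)) (fun ji => F ji.1 ji.2 x)
  have hf : ∀ a ∈ S, ∀ b ∈ S, (f a ≤ f b ↔ a ∣ b) := by
    intro a ha b hb
    obtain ⟨ha0, haN⟩ := hS a ha
    obtain ⟨hb0, hbN⟩ := hS b hb
    constructor
    · intro h
      rw [← Nat.factorization_le_iff_dvd ha0 hb0]
      intro p
      by_contra hp
      rw [not_le] at hp
      by_cases hpy : p < y
      · have := h (Sum.inl ⟨p, hpy⟩)
        simp only [f, Sum.elim_inl, Nat.cast_le] at this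
        omega
      · have hpa : p ∣ a := Nat.dvd_of_factorization_pos (by omega)
        have hpN : p < y ^ 2 ^ J := ((Nat.le_of_dvd (Nat.pos_of_ne_zero ha0) hpa).trans haN).trans_lt hJ
        have : ∃ j < J, y ^ 2 ^ j ≤ p ∧ p < y ^ 2 ^ (j + 1) := by
          exact find_layer y p J (by omega) hpN
        obtain ⟨j, hj, h1, h2⟩ := this
        obtain ⟨i, hi⟩ := hF2 j a b p hb0 hbN h1 h2 hp
        have := h (Sum.inr ⟨⟨j, hj⟩, i⟩)
        simp only [f, Sum.elim_inr] at this
        linarith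
    · intro h i
      rcases i with q | ⟨j, i⟩
      · simp only [f, Sum.elim_inl, Nat.cast_le]
        exact (Nat.factorization_le_iff_dvd ha0 hb0).2 h q
      · simp only [f, Sum.elim_inr]
        exact hF1 j i a b hb0 h
  refine ⟨Fintype.card ι, ?_, fun x => f x ∘ (Fintype.equivFin ι).symm, ?_⟩
  · simp only [ι, Fintype.card_sum, Fintype.card_fin, Fintype.card_sigma]
    push_cast
    rw [Fin.sum_univ_eq_sum_range (fun j => (t j : ℝ)) J]
    gcongr with j hj
    have := ht j
    push_cast at this
    exact this
  · intro a ha b hb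
    rw [← hf a ha b hb]
    constructor
    · intro h i
      simpa using h (Fintype.equivFin ι i)
    · intro h i
      exact h _

lemma two_pow_sq (J : ℕ) : J ^ 2 ≤ 2 * 2 ^ J := by
  rcases Nat.lt_or_ge J 4 with h | h
  · interval_cases J <;> norm_num
  · induction J, h using Nat.le_induction with
    | base => norm_num
    | succ n hn ih => rw [pow_succ 2 n]; nlinarith

lemma geom_half (J : ℕ) : ∑ j ∈ Finset.range J, (1 / 2 : ℝ) ^ j ≤ 2 := by
  have := geom_sum_eq (show (1/2:ℝ) ≠ 1 by norm_num) J
  rw [this]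
  have : (0:ℝ) ≤ (1/2) ^ J := by positivity
  rw [div_le_iff_of_neg (by norm_num)]
  linarith

lemma geom_two (J : ℕ) : ∑ j ∈ Finset.range J, (2 : ℝ) ^ j ≤ 2 ^ J := by
  have := geom_sum_eq (show (2:ℝ) ≠ 1 by norm_num) J
  rw [this]
  norm_num

lemma upper_bound (N y : ℕ) (hN : 1 ≤ N) (hy : 3 ≤ y) (S : Set ℕ) (hS : ∀ x ∈ S, x ≠ 0 ∧ x ≤ N) :
    ∃ d J : ℕ, (J : ℝ) ^ 2 ≤ 4 * Real.log N + 2 ∧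
      (d : ℝ) ≤ y + 4 * (Real.log N) ^ 2 / Real.log y + J * (4 * Real.log N + 1) + 4 * Real.log N + 2 * Real.log y ∧
      ∃ f : ℕ → (Fin d → ℝ), ∀ a ∈ S, ∀ b ∈ S, (f a ≤ f b ↔ a ∣ b) := by
  have hex : ∃ J, N < y ^ 2 ^ J := by
    refine ⟨N, ?_⟩
    have h1 : N < 2 ^ N := Nat.lt_two_pow_self
    have h2 : 2 ^ N < y ^ (2 ^ N) := Nat.lt_pow_self (by omega)
    omega
  classical
  obtain ⟨J, hJ, hJmin⟩ : ∃ J, N < y ^ 2 ^ J ∧ ∀ m < J, ¬ N < y ^ 2 ^ m :=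
    ⟨Nat.find hex, Nat.find_spec hex, fun m hm => Nat.find_min hex hm⟩
  obtain ⟨d, hd, hf⟩ := upper_emb N y J (by omega) hJ S hS
  set Λ := Real.log N with hΛ
  set l := Real.log y with hl
  have hΛ0 : 0 ≤ Λ := Real.log_nonneg (by exact_mod_cast hN)
  have hl1 : 1 ≤ l := by
    rw [hl, Real.le_log_iff_exp_le (by positivity)]
    have h3 : (3:ℝ) ≤ y := by exact_mod_cast hy
    linarith [Real.exp_one_lt_d9]
  have hpow : ∀ m, Real.log ((y ^ 2 ^ m : ℕ) : ℝ) = 2 ^ m * l := by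
    intro m; push_cast; rw [Real.log_pow]; push_cast; rfl
  have hlJ : (2:ℝ) ^ J * l ≤ 2 * Λ + l := by
    rcases J with _ | J
    · simp; linarith
    · have h1 : y ^ 2 ^ J ≤ N := not_lt.1 (hJmin J (by omega))
      have h2 : Real.log ((y ^ 2 ^ J : ℕ) : ℝ) ≤ Λ := Real.log_le_log (by positivity) (by exact_mod_cast h1)
      rw [hpow] at h2
      rw [pow_succ]; linarith
  have hJ2 : (2:ℝ) ^ J ≤ 2 * Λ + 1 := by
    nlinarith
  refine ⟨d, J, ?_, hd.trans ?_, hf⟩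
  · have : (J:ℝ) ^ 2 ≤ 2 * 2 ^ J := by exact_mod_cast two_pow_sq J
    linarith
  · have hterm : ∀ j ∈ Finset.range J, (((Nat.log (y ^ 2 ^ j) N : ℝ) + 1) ^ 2 * Real.log ((y ^ 2 ^ (j + 1) : ℕ) : ℝ) + 1)
        ≤ 2 * Λ ^ 2 / l * (1 / 2) ^ j + (4 * Λ + 1) + 2 * l * 2 ^ j := by
      intro j _
      have h2j : (0:ℝ) < 2 ^ j := by positivity
      have hr : (Nat.log (y ^ 2 ^ j) N : ℝ) ≤ Λ / (2 ^ j * l) := by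
        rw [le_div_iff₀ (by positivity), ← hpow, ← Real.log_pow]
        apply Real.log_le_log
        · positivity
        · exact_mod_cast Nat.pow_log_le_self (y ^ 2 ^ j) (by omega)
      rw [hpow]
      have h3 : ((Nat.log (y ^ 2 ^ j) N : ℝ) + 1) ^ 2 ≤ (Λ / (2 ^ j * l) + 1) ^ 2 := by gcongr
      calc _ ≤ (Λ / (2 ^ j * l) + 1) ^ 2 * (2 ^ (j + 1) * l) + 1 := by gcongr
        _ = _ := by
          rw [one_div, inv_pow]
          field_simp
          ring
    have hs := Finset.sum_le_sum hterm
    have hs2 : ∑ j ∈ Finset.range J, (2 * Λ ^ 2 / l * (1 / 2) ^ j + (4 * Λ + 1) + 2 * l * 2 ^ j)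
        = 2 * Λ ^ 2 / l * ∑ j ∈ Finset.range J, (1 / 2 : ℝ) ^ j + J * (4 * Λ + 1)
          + 2 * l * ∑ j ∈ Finset.range J, (2 : ℝ) ^ j := by
      rw [Finset.sum_add_distrib, Finset.sum_add_distrib, ← Finset.mul_sum, ← Finset.mul_sum,
        Finset.sum_const, Finset.card_range, nsmul_eq_mul]
    rw [hs2] at hs
    have g1 : 2 * Λ ^ 2 / l * ∑ j ∈ Finset.range J, (1 / 2 : ℝ) ^ j ≤ 2 * Λ ^ 2 / l * 2 := by
      gcongr; exact geom_half J
    have g2 : 2 * l * ∑ j ∈ Finset.range J, (2 : ℝ) ^ j ≤ 2 * l * 2 ^ J := by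
      gcongr; exact geom_two J
    have g3 : 2 * Λ ^ 2 / l * 2 = 4 * Λ ^ 2 / l := by ring
    linarith

lemma upper_final (N : ℕ) (hN : 1 ≤ N) (L l : ℝ) (hL : L = Real.exp l) (hl : 100 ≤ l)
    (hΛ : Real.log N ≤ 1.1 * L) (S : Set ℕ) (hS : ∀ x ∈ S, x ≠ 0 ∧ x ≤ N) :
    (divDim S : ℝ) ≤ 4 * L ^ 2 / l := by
  set v := Real.exp (l / 4) with hv
  have hv4 : L = v ^ 4 := by rw [hL, hv, ← Real.exp_nat_mul]; congr 1; push_cast; ring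
  have hvl : l ≤ v := by
    have h1 : v = Real.exp (l / 8) ^ 2 := by rw [hv, ← Real.exp_nat_mul]; congr 1; push_cast; ring
    have h2 := Real.add_one_le_exp (l / 8)
    rw [h1]; nlinarith
  have hv6 : Real.exp (3 / 2 * l) = v ^ 6 := by rw [hv, ← Real.exp_nat_mul]; congr 1; push_cast; ring
  have hv100 : 100 ≤ v := hl.trans hvl
  obtain ⟨y, hy1, hy2⟩ : ∃ y : ℕ, v ^ 6 ≤ y ∧ (y:ℝ) ≤ v ^ 6 + 1 :=
    ⟨⌈v ^ 6⌉₊, Nat.le_ceil _, (Nat.ceil_lt_add_one (by positivity)).le⟩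
  have hv6' : 100 ^ 6 ≤ v ^ 6 := by gcongr
  have hy3 : 3 ≤ y := by
    have : (3:ℝ) ≤ y := by linarith
    exact_mod_cast this
  obtain ⟨d, J, hJ, hd, hf⟩ := upper_bound N y hN hy3 S hS
  have hdim : divDim S ≤ d := Nat.sInf_le hf
  have hdim' : (divDim S : ℝ) ≤ d := by exact_mod_cast hdim
  refine hdim'.trans (hd.trans ?_)
  have hΛ0 : 0 ≤ Real.log N := Real.log_nonneg (by exact_mod_cast hN)
  have hlog1 : 3 / 2 * l ≤ Real.log y := by
    rw [Real.le_log_iff_exp_le (by linarith), hv6]; exact hy1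
  have hlog2 : Real.log y ≤ y := Real.log_le_self (by positivity)
  set Λ := Real.log N
  rw [hv4] at hΛ
  have hv2 : (100:ℝ) ^ 2 ≤ v ^ 2 := by gcongr
  have hv44 : (100:ℝ) ^ 4 ≤ v ^ 4 := by gcongr
  have hJ' : (J:ℝ) ≤ 3 * v ^ 2 := by
    apply (pow_le_pow_iff_left₀ (by positivity) (by positivity) two_ne_zero).1
    nlinarith
  have t1 : 4 * Λ ^ 2 / Real.log y ≤ 4 * (1.1 * v ^ 4) ^ 2 / (3 / 2 * l) := by gcongr
  have t2 : J * (4 * Λ + 1) ≤ 3 * v ^ 2 * (4 * (1.1 * v ^ 4) + 1) := by gcongr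
  have t3 : 4 * (1.1 * v ^ 4) ^ 2 / (3 / 2 * l) = (4 * 1.21 / 1.5) * (v ^ 8 / l) := by
    field_simp; norm_num
  have t4 : 4 * L ^ 2 / l = 4 * (v ^ 8 / l) := by rw [hv4]; ring
  have t5 : 100 * v ^ 6 ≤ v ^ 8 / l := by
    rw [le_div_iff₀ (by linarith)]
    have : 100 * l ≤ v ^ 2 := by nlinarith
    calc 100 * v ^ 6 * l = v ^ 6 * (100 * l) := by ring
      _ ≤ v ^ 6 * v ^ 2 := by gcongr
      _ = v ^ 8 := by ring
  have t6 : v ^ 4 ≤ v ^ 6 := pow_le_pow_right₀ (by linarith) (by norm_num)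
  have t7 : v ^ 2 ≤ v ^ 6 := pow_le_pow_right₀ (by linarith) (by norm_num)
  have t8 : 3 * v ^ 2 * (4 * (1.1 * v ^ 4) + 1) = 13.2 * v ^ 6 + 3 * v ^ 2 := by ring
  rw [t4]
  rw [t3] at t1
  rw [t8] at t2
  linarith

lemma exists_inv (a p : ℕ) (ha : 1 ≤ a) (h : Nat.Coprime p a) : ∃ q, 1 ≤ q ∧ q ≤ a ∧ p * q ≡ 1 [MOD a] := by
  rcases Nat.eq_or_lt_of_le ha with h1 | h1
  · exact ⟨1, le_rfl, ha, by rw [← h1]; exact Nat.modEq_one⟩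
  · obtain ⟨m, -, hm⟩ := Nat.exists_mul_mod_eq_one_of_coprime h h1
    have hm' : p * (m % a) ≡ 1 [MOD a] := by
      have e1 : p * (m % a) ≡ p * m [MOD a] := Nat.ModEq.mul_left p (Nat.mod_modEq m a)
      have e2 : p * m ≡ 1 [MOD a] := by
        unfold Nat.ModEq; rw [Nat.mod_eq_of_lt h1]; simpa using hm
      exact e1.trans e2
    refine ⟨m % a, ?_, (Nat.mod_lt _ (by omega)).le, hm'⟩
    rcases Nat.eq_zero_or_pos (m % a) with h0 | h0
    · rw [h0] at hm'
      unfold Nat.ModEq at hm'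
      rw [Nat.mod_eq_of_lt h1] at hm'
      simp at hm'
    · exact h0

lemma mem_ap (a b n w : ℕ) (ha : 1 ≤ a) (hb : 1 ≤ b) (hw : w ≡ 1 [MOD a]) (h1 : 1 < w)
    (h2 : b * w ≤ a * n + b) : b * w ∈ {m : ℕ | ∃ k : ℕ, 1 ≤ k ∧ k ≤ n ∧ m = a * k + b} := by
  obtain ⟨c, hc⟩ := (Nat.modEq_iff_dvd' h1.le).1 hw.symm
  have hw' : w = a * c + 1 := by omega
  have hc0 : 1 ≤ c := by
    rcases Nat.eq_zero_or_pos c with h | h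
    · subst h; omega
    · exact h
  refine ⟨b * c, Nat.mul_pos hb hc0, ?_, by rw [hw']; ring⟩
  have : a * (b * c) + b ≤ a * n + b := by
    calc a * (b * c) + b = b * w := by rw [hw']; ring
      _ ≤ _ := h2
  exact Nat.le_of_mul_le_mul_left (by omega : a * (b * c) ≤ a * n) ha

lemma lower_comb (a b n T d s : ℕ) (ha : 1 ≤ a) (hb : 1 ≤ b) (hs : 2 ≤ s)
    (hπ : d + s + a ≤ Nat.primeCounting T) (hk : b * (a * T) ^ (s - 1 + d / s) ≤ a * n + b)
    (f : ℕ → (Fin d → ℝ))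
    (hf : ∀ x ∈ {m : ℕ | ∃ k : ℕ, 1 ≤ k ∧ k ≤ n ∧ m = a * k + b},
      ∀ y ∈ {m : ℕ | ∃ k : ℕ, 1 ≤ k ∧ k ≤ n ∧ m = a * k + b}, (f x ≤ f y ↔ x ∣ y)) : False := by
  classical
  let M : Finset ℕ := Nat.primesLE T \ Finset.Icc 1 a
  have hMcard : d + s ≤ M.card := by
    have h1 : _ ≤ M.card := Finset.le_card_sdiff (Finset.Icc 1 a) (Nat.primesLE T)
    rw [Nat.primesLE_card_eq_primeCounting, Nat.card_Icc] at h1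
    omega
  have hM : ∀ p ∈ M, p.Prime ∧ p ≤ T ∧ a < p := by
    intro p hp
    obtain ⟨h1, h2⟩ := Finset.mem_sdiff.1 hp
    obtain ⟨h3, h4⟩ := Nat.mem_primesLE.1 h1
    refine ⟨h4, h3, ?_⟩
    rw [Finset.mem_Icc] at h2
    have := h4.pos
    omega
  have hq : ∀ p, ∃ q, p ∈ M → 1 ≤ q ∧ q ≤ a ∧ p * q ≡ 1 [MOD a] := by
    intro p
    by_cases hp : p ∈ M
    · obtain ⟨h1, h2, h3⟩ := hM p hp
      obtain ⟨q, hq⟩ := exists_inv a p ha (Nat.coprime_of_lt_prime (by omega) h3 h1)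
      exact ⟨q, fun _ => hq⟩
    · exact ⟨0, fun h => absurd h hp⟩
  choose q hq using hq
  have hT : 1 ≤ a * T := by
    have hne : M.Nonempty := by rw [← Finset.card_pos]; omega
    obtain ⟨p, hp⟩ := hne
    obtain ⟨h1, h2, h3⟩ := hM p hp
    exact Nat.mul_pos ha (by omega)
  have hle : ∀ p ∈ M, p * q p ≤ a * T := by
    intro p hp
    rw [mul_comm]
    exact Nat.mul_le_mul (hq p hp).2.1 (hM p hp).2.1
  have hgt : ∀ p ∈ M, 1 < p * q p := by
    intro p hp
    have h1 := (hM p hp).1.one_lt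
    have h2 := (hq p hp).1
    nlinarith
  let X : ℕ → ℕ := fun p => b * (p * q p)
  obtain ⟨i, hiM, S, hSM, hiS, hS1, hS2, hS3⟩ := dushnik_s12 M d s (fun t p => f (X p) t) (by omega) hMcard
  have hXmem : ∀ p ∈ M, X p ∈ {m : ℕ | ∃ k : ℕ, 1 ≤ k ∧ k ≤ n ∧ m = a * k + b} := by
    intro p hp
    refine mem_ap a b n _ ha hb (hq p hp).2.2 (hgt p hp) (le_trans ?_ hk)
    apply Nat.mul_le_mul_left
    exact (hle p hp).trans (Nat.le_self_pow (by omega) _)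
  have hYmem : b * ∏ p ∈ S, (p * q p) ∈ {m : ℕ | ∃ k : ℕ, 1 ≤ k ∧ k ≤ n ∧ m = a * k + b} := by
    refine mem_ap a b n _ ha hb ?_ ?_ (le_trans ?_ hk)
    · have : ∀ U : Finset ℕ, U ⊆ M → ∏ p ∈ U, (p * q p) ≡ 1 [MOD a] := by
        intro U
        induction U using Finset.induction_on with
        | empty => intro _; simp; rfl
        | insert p U hp ih =>
          intro hU
          rw [Finset.prod_insert hp]
          simpa using Nat.ModEq.mul (hq p (hU (Finset.mem_insert_self _ _))).2.2
            (ih ((Finset.subset_insert _ _).trans hU))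
      exact this S hSM
    · have hne : S.Nonempty := by rw [← Finset.card_pos]; omega
      obtain ⟨p, hp⟩ := hne
      refine (hgt p (hSM hp)).trans_le (Nat.le_of_dvd ?_ (Finset.dvd_prod_of_mem _ hp))
      exact Finset.prod_pos (fun p hp => by linarith [hgt p (hSM hp)])
    · apply Nat.mul_le_mul_left
      exact (Finset.prod_le_pow_card _ _ _ (fun p hp => hle p (hSM hp))).trans
        (Nat.pow_le_pow_right hT hS2)
  have hdvd : X i ∣ b * ∏ p ∈ S, (p * q p) := by
    rw [← hf _ (hXmem i hiM) _ hYmem]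
    intro t
    obtain ⟨j, hj, hij⟩ := hS3 t
    refine hij.trans ?_
    exact (hf _ (hXmem j (hSM hj)) _ hYmem).2 (Nat.mul_dvd_mul_left b (Finset.dvd_prod_of_mem _ hj)) t
  have h1 : i ∣ ∏ p ∈ S, (p * q p) :=
    (Dvd.intro _ rfl).trans (Nat.dvd_of_mul_dvd_mul_left hb hdvd)
  obtain ⟨hip, -, hia⟩ := hM i hiM
  obtain ⟨p, hp, h2⟩ := (Prime.dvd_finsetProd_iff hip.prime _).1 h1
  rcases hip.dvd_mul.1 h2 with h3 | h3
  · have := (Nat.prime_dvd_prime_iff_eq hip (hM p (hSM hp)).1).1 h3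
    exact hiS (this ▸ hp)
  · have h4 := Nat.le_of_dvd (hq p (hSM hp)).1 h3
    have := (hq p (hSM hp)).2.1
    omega

lemma pi_lower (L l A : ℝ) (hL : L = Real.exp l) (hl : 100 ≤ l) (hA : 16 * (A + 2) ≤ l) :
    (L / l) ^ 2 + L / l + 2 + A ≤ (Nat.primeCounting ⌊L ^ 2⌋₊ : ℝ) := by
  have hLl : l ≤ L := by rw [hL]; linarith [Real.add_one_le_exp l]
  have hLl2 : l ^ 2 / 4 ≤ L := by
    have h1 : L = Real.exp (l / 2) ^ 2 := by rw [hL, ← Real.exp_nat_mul]; congr 1; push_cast; ring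
    have h2 := Real.add_one_le_exp (l / 2)
    rw [h1]; nlinarith
  have hL100 : 100 ≤ L := hl.trans hLl
  have h := Chebyshev.pi_ge' (x := L ^ 2) (by nlinarith)
  have hlog : Real.log (L ^ 2) = 2 * l := by rw [Real.log_pow, hL, Real.log_exp]; norm_num
  rw [hlog] at h
  refine le_trans ?_ h
  have h3 : Real.log (L ^ 2 + 2) ≤ 3 * l := by
    have : Real.log (L ^ 3) = 3 * l := by rw [Real.log_pow, hL, Real.log_exp]; norm_num
    rw [← this]
    apply Real.log_le_log (by positivity)
    nlinarith [sq_nonneg L]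
  have h2 := Real.log_two_gt_d9
  have h4 : L ^ 2 / 2 ≤ (L ^ 2 - 1) * Real.log 2 - Real.log (L ^ 2 + 2) := by
    have : (L ^ 2 - 1) * 0.69 ≤ (L ^ 2 - 1) * Real.log 2 := by
      apply mul_le_mul_of_nonneg_left (by linarith) (by nlinarith)
    nlinarith
  have hl0 : 0 < l := by linarith
  rw [le_div_iff₀ (by linarith)]
  refine le_trans ?_ h4
  have e1 : (L / l) ^ 2 * (2 * l) = 2 * L ^ 2 / l := by field_simp
  have e2 : L / l * (2 * l) = 2 * L := by field_simp
  have e3 : 2 * L ^ 2 / l ≤ L ^ 2 / 50 := by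
    rw [div_le_iff₀ hl0]; nlinarith [sq_nonneg L]
  have e4 : (2 + A) * (2 * l) ≤ L ^ 2 / 8 := by nlinarith
  nlinarith

lemma lower_final (a b n : ℕ) (ha : 1 ≤ a) (hb : 1 ≤ b) (hn : 1 ≤ n) (L l c : ℝ) (hLn : L = Real.log n) (hL : L = Real.exp l)
    (hl : 100 ≤ l) (hla : 16 * ((a:ℝ) + 2) ≤ l) (hc0 : 0 < c) (hc1 : c < 1 / 4)
    (h1 : 4 * Real.log a ≤ (1 - 4 * c) * l) (h2 : 4 * Real.log b ≤ (1 - 4 * c) * l)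
    (h3 : 32 ≤ (1 - 4 * c) * l) (d : ℕ) (f : ℕ → (Fin d → ℝ))
    (hf : ∀ x ∈ {m : ℕ | ∃ k : ℕ, 1 ≤ k ∧ k ≤ n ∧ m = a * k + b},
      ∀ y ∈ {m : ℕ | ∃ k : ℕ, 1 ≤ k ∧ k ≤ n ∧ m = a * k + b}, (f x ≤ f y ↔ x ∣ y)) :
    c ^ 2 * (L / l) ^ 2 ≤ d := by
  by_contra hcon
  rw [not_le] at hcon
  have hl0 : 0 < l := by linarith
  have hLl : l ≤ L := by rw [hL]; linarith [Real.add_one_le_exp l]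
  have hLl2 : l ^ 2 / 4 ≤ L := by
    have h1 : L = Real.exp (l / 2) ^ 2 := by rw [hL, ← Real.exp_nat_mul]; congr 1; push_cast; ring
    have h2 := Real.add_one_le_exp (l / 2)
    rw [h1]; nlinarith
  have hL0 : 0 < L := by linarith
  set X := L / l with hX
  have hX0 : 0 < X := by positivity
  obtain ⟨s, hs1, hs2, hs3⟩ : ∃ s : ℕ, c * X + 1 ≤ s ∧ (s:ℝ) ≤ c * X + 2 ∧ 2 ≤ s := by
    refine ⟨⌊c * X⌋₊ + 2, ?_, ?_, by omega⟩
    · push_cast; linarith [Nat.lt_floor_add_one (c * X)]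
    · push_cast; linarith [Nat.floor_le (show 0 ≤ c * X by positivity)]
  have hs0 : (0:ℝ) < s := by linarith [mul_pos hc0 hX0]
  have hds : ((d / s : ℕ) : ℝ) ≤ c * X := by
    refine Nat.cast_div_le.trans ?_
    rw [div_le_iff₀ hs0]
    nlinarith [mul_pos hc0 hX0]
  have hk : ((s - 1 + d / s : ℕ) : ℝ) ≤ 2 * c * X + 1 := by
    rw [Nat.cast_add, Nat.cast_sub (by omega)]
    push_cast
    linarith
  have hpi := pi_lower L l a hL hl hla
  refine lower_comb a b n ⌊L ^ 2⌋₊ d s ha hb hs3 ?_ ?_ f hf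
  · have : ((d + s + a : ℕ) : ℝ) ≤ (Nat.primeCounting ⌊L ^ 2⌋₊ : ℝ) := by
      refine le_trans ?_ hpi
      push_cast
      have q1 : c ^ 2 * X ^ 2 ≤ 1 * X ^ 2 := by
        gcongr; nlinarith
      have q2 : c * X ≤ 1 * X := by gcongr; linarith
      linarith
    exact_mod_cast this
  · set T := ⌊L ^ 2⌋₊ with hT
    set k := s - 1 + d / s
    have hT1 : (1:ℝ) ≤ T := by
      have : 1 ≤ T := Nat.le_floor (by push_cast; nlinarith)
      exact_mod_cast this
    have hT2 : (T:ℝ) ≤ L ^ 2 := Nat.floor_le (by positivity)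
    have ha0 : (0:ℝ) < a := by exact_mod_cast ha
    have hb0 : (0:ℝ) < b := by exact_mod_cast hb
    have hla0 : 0 ≤ Real.log a := Real.log_nonneg (by exact_mod_cast ha)
    have hlT : Real.log T ≤ 2 * l := by
      have hlog : Real.log (L ^ 2) = 2 * l := by rw [Real.log_pow, hL, Real.log_exp]; norm_num
      rw [← hlog]
      exact Real.log_le_log (by linarith) hT2
    have hmain : Real.log ((b:ℝ) * (a * T) ^ k) ≤ Real.log n := by
      rw [Real.log_mul hb0.ne' (by positivity), Real.log_pow, Real.log_mul ha0.ne' (by positivity), ← hLn]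
      have q1 : (k:ℝ) * (Real.log a + Real.log T) ≤ (2 * c * X + 1) * (Real.log a + 2 * l) := by
        have : 0 ≤ Real.log T := Real.log_nonneg hT1
        gcongr
      have q2 : X * l = L := by rw [hX]; field_simp
      have q3 : 2 * c * X * Real.log a ≤ X * Real.log a := by
        gcongr; nlinarith
      have hη : 0 < 1 - 4 * c := by linarith
      have q4 : X * Real.log a ≤ (1 - 4 * c) * L / 4 := by
        have := mul_le_mul_of_nonneg_left h1 hX0.le
        have e : X * ((1 - 4 * c) * l) = (1 - 4 * c) * L := by rw [← q2]; ring
        linarith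
      have hL2 : 2 * l ≤ L := by
        have := mul_le_mul_of_nonneg_right hl hl0.le
        linarith [sq l]
      have qm := mul_le_mul_of_nonneg_left hL2 hη.le
      have qn := mul_le_mul_of_nonneg_left hLl2 hη.le
      have qp := mul_le_mul_of_nonneg_right h3 hl0.le
      have e7 : (1 - 4 * c) * (l ^ 2 / 4) = (1 - 4 * c) * l * l / 4 := by ring
      have q7 : 2 * l ≤ (1 - 4 * c) * L / 4 := by linarith
      have e8 : (2 * c * X + 1) * (Real.log a + 2 * l)
          = 2 * c * X * Real.log a + 4 * c * (X * l) + Real.log a + 2 * l := by ring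
      rw [e8, q2] at q1
      have e9 : (1 - 4 * c) * (2 * l) = 2 * ((1 - 4 * c) * l) := by ring
      have e10 : (1 - 4 * c) * L = L - 4 * c * L := by ring
      have hp : 0 < (1 - 4 * c) * L := by positivity
      linarith
    have hmain2 : (b:ℝ) * (a * T) ^ k ≤ n :=
      (Real.log_le_log_iff (by positivity) (by exact_mod_cast hn)).1 hmain
    have hmain3 : b * (a * T) ^ k ≤ n := by exact_mod_cast hmain2
    have han : n ≤ a * n := Nat.le_mul_of_pos_left n ha
    exact hmain3.trans (han.trans (Nat.le_add_right _ _))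

/-- For fixed positive integers `a, b`, for every `ε > 0` and all large `n`,
`(1/16 - ε) (log n)²/(log log n)² ≤ dim(D_{a[n]+b}) ≤ (4 + ε) (log n)²/log log n`. -/
theorem divDim_arith_prog_bounds (a b : ℕ) (ha : 1 ≤ a) (hb : 1 ≤ b) :
    ∀ ε : ℝ, 0 < ε → ∃ N : ℕ, ∀ n : ℕ, N ≤ n →
      (1 / 16 - ε) * (Real.log n) ^ 2 / (Real.log (Real.log n)) ^ 2
          ≤ (divDim {m : ℕ | ∃ k : ℕ, 1 ≤ k ∧ k ≤ n ∧ m = a * k + b} : ℝ) ∧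
        (divDim {m : ℕ | ∃ k : ℕ, 1 ≤ k ∧ k ≤ n ∧ m = a * k + b} : ℝ)
          ≤ (4 + ε) * (Real.log n) ^ 2 / Real.log (Real.log n) := by
  intro ε hε
  have htend : Filter.Tendsto (fun n : ℕ => Real.log (Real.log n)) Filter.atTop Filter.atTop :=
    Real.tendsto_log_atTop.comp (Real.tendsto_log_atTop.comp tendsto_natCast_atTop_atTop)
  set c := Real.sqrt (1 / 16 - ε) with hc
  have hc1 : c < 1 / 4 := by
    rw [hc, Real.sqrt_lt' (by norm_num)]; norm_num; linarith
  have hη : 0 < 1 - 4 * c := by linarith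
  have hev := (htend.eventually_ge_atTop 100).and ((htend.eventually_ge_atTop (16 * ((a:ℝ) + 2))).and
    ((htend.eventually_ge_atTop (4 * Real.log a / (1 - 4 * c))).and
    ((htend.eventually_ge_atTop (4 * Real.log b / (1 - 4 * c))).and
    ((htend.eventually_ge_atTop (32 / (1 - 4 * c))).and
    ((htend.eventually_ge_atTop (10 * Real.log ((a + b : ℕ) : ℝ))).and (Filter.eventually_ge_atTop 3))))))
  obtain ⟨N, hN⟩ := Filter.eventually_atTop.1 hev
  refine ⟨N, fun n hn => ?_⟩
  obtain ⟨h1, h2, h3, h4, h5, h6, h7⟩ := hN n hn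
  set L := Real.log n with hL
  set l := Real.log L with hl
  have hn3 : (3:ℝ) ≤ n := by exact_mod_cast h7
  have hL0 : 0 < L := Real.log_pos (by linarith)
  have hLe : L = Real.exp l := (Real.exp_log hL0).symm
  have hlL : l ≤ L := by rw [hLe]; linarith [Real.add_one_le_exp l]
  set S := {m : ℕ | ∃ k : ℕ, 1 ≤ k ∧ k ≤ n ∧ m = a * k + b} with hSdef
  have hS : ∀ x ∈ S, x ≠ 0 ∧ x ≤ a * n + b := by
    rintro x ⟨k, hk1, hk2, rfl⟩
    refine ⟨by omega, ?_⟩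
    have := Nat.mul_le_mul_left a hk2
    omega
  have hN1 : 1 ≤ a * n + b := by omega
  constructor
  · rcases le_or_gt (1 / 16) ε with he | he
    · have : (1 / 16 - ε) * L ^ 2 / l ^ 2 ≤ 0 := by
        apply div_nonpos_of_nonpos_of_nonneg _ (by positivity)
        apply mul_nonpos_of_nonpos_of_nonneg (by linarith) (by positivity)
      exact this.trans (Nat.cast_nonneg _)
    · have hc0 : 0 < c := Real.sqrt_pos.2 (by linarith)
      have hc2 : c ^ 2 = 1 / 16 - ε := Real.sq_sqrt (by linarith)
      have hne : {d : ℕ | ∃ f : ℕ → (Fin d → ℝ), ∀ a ∈ S, ∀ b ∈ S, (f a ≤ f b ↔ a ∣ b)}.Nonempty := by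
        obtain ⟨d, -, -, -, hf⟩ := upper_bound (a * n + b) 3 hN1 le_rfl S hS
        exact ⟨d, hf⟩
      obtain ⟨f, hf⟩ := Nat.sInf_mem hne
      rw [div_le_iff₀ hη] at h3 h4 h5
      have := lower_final a b n ha hb (by omega) L l c hL hLe h1 h2 hc0 hc1 (by linarith) (by linarith)
        (by linarith) _ f hf
      calc (1 / 16 - ε) * L ^ 2 / l ^ 2 = c ^ 2 * (L / l) ^ 2 := by rw [hc2, div_pow, mul_div_assoc]
        _ ≤ _ := this
  · have hΛ : Real.log ((a * n + b : ℕ) : ℝ) ≤ 1.1 * L := by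
      have e1 : ((a * n + b : ℕ) : ℝ) ≤ ((a + b : ℕ) : ℝ) * n := by
        have : a * n + b ≤ (a + b) * n := by nlinarith
        exact_mod_cast this
      have e2 := Real.log_le_log (by exact_mod_cast hN1) e1
      rw [Real.log_mul (by positivity) (by positivity)] at e2
      linarith
    have := upper_final (a * n + b) hN1 L l hLe h1 hΛ S hS
    refine this.trans ?_
    have hl0 : 0 < l := by linarith
    gcongr
    linarith
end

section
/- Fix α ∈ (0,1). For every ε > 0 there exists N such that for all n ≥ N, the 2-dimension of the divisibility poset on the set of integers in (n^α, n] satisfies ((1−α)²/16 − ε)·(log n)²/(log log n)² ≤ dim₂(D_{(n^α, n]}) ≤ ((4/3)·e·π² + ε)·(log n)²/(log log n). -/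
/-- The 2-dimension of the divisibility poset on a set `S ⊆ ℕ`:
the least `d` such that there is an order embedding of `(S, ∣)` into the
powerset of `{1, …, d}` ordered by inclusion. -/
noncomputable def divDim2 (S : Set ℕ) : ℕ :=
  sInf {d : ℕ | ∃ f : ℕ → Finset (Fin d), ∀ a ∈ S, ∀ b ∈ S, (f a ⊆ f b ↔ a ∣ b)}


open Finset in
/-- Erdos-Frankl-Furedi style bound for cover-free families. -/
theorem cover_free_bound {d : ℕ} (F : ℕ → Finset (Fin d)) (R : Finset ℕ) (k : ℕ)
    (h : ∀ p ∈ R, ∀ B ⊆ R, B.card ≤ k → p ∉ B → ¬ F p ⊆ B.biUnion F) :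
    R.card ≤ d + k ∨ (k + 1) * (k + 2) ≤ 2 * d := by
  classical
  set P1 := R.filter (fun p => ∃ i ∈ F p, ∀ q ∈ R, q ≠ p → i ∉ F q) with hP1
  have hP1d : P1.card ≤ d := by
    have hx : ∀ p ∈ P1, ∃ i ∈ F p, ∀ q ∈ R, q ≠ p → i ∉ F q := fun p hp => (mem_filter.1 hp).2
    rcases P1.eq_empty_or_nonempty with he | ⟨p0, hp0⟩
    · rw [he]; simp
    have : Nonempty (Fin d) := ⟨(hx p0 hp0).choose⟩
    choose! g hg using hx
    have : P1.card ≤ (Finset.univ : Finset (Fin d)).card := by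
      refine Finset.card_le_card_of_injOn g (fun _ _ => mem_univ _) ?_
      intro p hp q hq hpq
      by_contra hne
      have h1 := (hg p hp).2 q (mem_filter.1 hq).1 (Ne.symm hne)
      rw [hpq] at h1
      exact h1 (hg q hq).1
    simpa using this
  by_cases hR : (R \ P1).card ≤ k
  · left
    have : R.card ≤ (R \ P1).card + P1.card := by
      rw [Finset.card_sdiff_add_card]; exact card_le_card subset_union_left
    omega
  right
  push Not at hR
  have key : ∀ C : Finset ℕ, C ⊆ R \ P1 → C.card ≤ k + 1 →
      C.card * (2 * k + 3) ≤ 2 * (C.biUnion F).card + C.card * C.card := by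
    intro C
    induction C using Finset.induction_on with
    | empty => intro _ _; simp
    | insert p C hp ih =>
      intro hsub hcard
      rw [card_insert_of_notMem hp] at hcard
      have hCsub : C ⊆ R \ P1 := (subset_insert _ _).trans hsub
      have ih' := ih hCsub (by omega)
      have hpR : p ∈ R \ P1 := hsub (mem_insert_self _ _)
      have hpR' : p ∈ R := (mem_sdiff.1 hpR).1
      have hgrow : k + 1 ≤ (F p \ C.biUnion F).card + C.card := by
        by_contra hlt
        push Not at hlt
        have hx : ∀ i ∈ F p, ∃ q ∈ R, q ≠ p ∧ i ∈ F q := by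
          intro i hi
          by_contra hcon
          push Not at hcon
          exact (mem_sdiff.1 hpR).2 (mem_filter.2 ⟨hpR', i, hi, hcon⟩)
        choose! g hg using hx
        refine h p hpR' (C ∪ (F p \ C.biUnion F).image g) ?_ ?_ ?_ ?_
        · apply union_subset (hCsub.trans sdiff_subset)
          intro q hq
          obtain ⟨i, hi, rfl⟩ := mem_image.1 hq
          exact (hg i (mem_sdiff.1 hi).1).1
        · have h1 := card_union_le C ((F p \ C.biUnion F).image g)
          have h2 := card_image_le (s := F p \ C.biUnion F) (f := g)
          omega
        · intro hmem
          rcases mem_union.1 hmem with h1 | h1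
          · exact hp h1
          · obtain ⟨i, hi, he⟩ := mem_image.1 h1
            exact (hg i (mem_sdiff.1 hi).1).2.1 he
        · intro i hi
          by_cases hiC : i ∈ C.biUnion F
          · obtain ⟨q, hq, hiq⟩ := mem_biUnion.1 hiC
            exact mem_biUnion.2 ⟨q, mem_union_left _ hq, hiq⟩
          · exact mem_biUnion.2 ⟨g i, mem_union_right _
              (mem_image_of_mem _ (mem_sdiff.2 ⟨hi, hiC⟩)), (hg i hi).2.2⟩
      have hun : ((insert p C).biUnion F).card = (F p \ C.biUnion F).card + (C.biUnion F).card := by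
        rw [biUnion_insert, Finset.card_sdiff_add_card]
      rw [hun, card_insert_of_notMem hp]
      nlinarith
  obtain ⟨C, hC, hCc⟩ := Finset.exists_subset_card_eq (Nat.succ_le_of_lt hR)
  have h1 := key C hC (by omega)
  have h2 : (C.biUnion F).card ≤ d := by simpa using Finset.card_le_univ (C.biUnion F)
  rw [hCc] at h1
  simp only [Nat.succ_eq_add_one] at h1
  nlinarith

open Finset in
/-- greedy covering -/
theorem greedy_cover_s16 {ι κ : Type*} (Ω : Finset ι) (P : ι → ℝ) (hP : ∀ ω ∈ Ω, 0 ≤ P ω)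
    (hsum : ∑ ω ∈ Ω, P ω = 1) (X : Finset κ) (good : ι → κ → Prop) [∀ ω x, Decidable (good ω x)]
    (δ : ℝ) (hδ : δ ≤ 1)
    (hg : ∀ x ∈ X, δ ≤ ∑ ω ∈ Ω, if good ω x then P ω else 0) (d : ℕ) :
    ∃ F : Finset ι, F ⊆ Ω ∧ F.card ≤ d ∧
      (((X.filter (fun x => ∀ ω ∈ F, ¬ good ω x)).card : ℕ) : ℝ) ≤ (1 - δ) ^ d * X.card := by
  classical
  induction d with
  | zero => exact ⟨∅, by simp⟩
  | succ d ih =>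
    obtain ⟨F, hF, hFc, hFX⟩ := ih
    set Y := X.filter (fun x => ∀ ω ∈ F, ¬ good ω x) with hY
    have h1 : ∃ ω ∈ Ω, δ * Y.card ≤ ((Y.filter (fun x => good ω x)).card : ℝ) := by
      by_contra hcon
      push Not at hcon
      have hne : Ω.Nonempty := by
        rw [nonempty_iff_ne_empty]; rintro rfl; simp at hsum
      have h2 : ∑ ω ∈ Ω, P ω * ((Y.filter (fun x => good ω x)).card : ℝ)
          < ∑ ω ∈ Ω, P ω * (δ * Y.card) := by
        apply sum_lt_sum
        · intro ω hω
          exact mul_le_mul_of_nonneg_left (hcon ω hω).le (hP ω hω)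
        · by_contra hall
          push Not at hall
          have : ∀ ω ∈ Ω, P ω = 0 := by
            intro ω hω
            have h3 := hall ω hω
            have h4 := hcon ω hω
            have h5 := hP ω hω
            by_contra hne
            have h6 : 0 < P ω := lt_of_le_of_ne h5 (Ne.symm hne)
            nlinarith
          rw [sum_eq_zero this] at hsum
          norm_num at hsum
      rw [← sum_mul, hsum, one_mul] at h2
      have h3 : ∑ ω ∈ Ω, P ω * ((Y.filter (fun x => good ω x)).card : ℝ)
          = ∑ x ∈ Y, ∑ ω ∈ Ω, if good ω x then P ω else 0 := by
        rw [sum_comm]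
        apply sum_congr rfl
        intro ω _
        rw [← sum_filter, sum_const, nsmul_eq_mul, mul_comm]
      rw [h3] at h2
      have h4 : ∑ x ∈ Y, δ ≤ ∑ x ∈ Y, ∑ ω ∈ Ω, if good ω x then P ω else 0 :=
        sum_le_sum fun x hx => hg x (mem_filter.1 hx).1
      rw [sum_const, nsmul_eq_mul] at h4
      linarith
    obtain ⟨ω, hω, hc⟩ := h1
    refine ⟨insert ω F, insert_subset hω hF, (card_insert_le _ _).trans (by omega), ?_⟩
    have h2 : X.filter (fun x => ∀ ω' ∈ insert ω F, ¬ good ω' x)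
        = Y.filter (fun x => ¬ good ω x) := by
      ext x; simp only [hY, mem_filter, forall_mem_insert]; tauto
    rw [h2]
    have h3 := card_filter_add_card_filter_not (s := Y) (fun x => good ω x)
    have h3' : ((Y.filter (fun x => good ω x)).card : ℝ)
      + ((Y.filter (fun x => ¬ good ω x)).card : ℝ) = Y.card := by exact_mod_cast h3
    have h4 : (1 - δ) * (Y.card : ℝ) ≤ (1 - δ) * ((1 - δ) ^ d * X.card) :=
      mul_le_mul_of_nonneg_left hFX (by linarith)
    rw [pow_succ]
    linarith

open Finset in
theorem one_sub_sum_le_prod' {ι : Type*} (s : Finset ι) (w : ι → ℝ)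
    (h0 : ∀ i, 0 ≤ w i) (h1 : ∀ i ∈ s, w i ≤ 1) : 1 - ∑ i ∈ s, w i ≤ ∏ i ∈ s, (1 - w i) := by
  classical
  induction s using Finset.induction_on with
  | empty => simp
  | insert a s ha ih =>
    rw [sum_insert ha, prod_insert ha]
    have ih' := ih (fun i hi => h1 i (mem_insert_of_mem hi))
    have h2 : ∏ i ∈ s, (1 - w i) ≤ 1 := prod_le_one
      (fun i hi => by linarith [h1 i (mem_insert_of_mem hi)]) (fun i _ => by linarith [h0 i])
    nlinarith [h0 a]

open Finset in
/-- random subset -/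
theorem random_subset {ι : Type*} [DecidableEq ι] (T : Finset ι) (w : ι → ℝ) (h0 : ∀ i, 0 ≤ w i)
    (h1 : ∀ i ∈ T, w i ≤ 1) (x : ι) (hx : x ∈ T) (B : Finset ι) (hB : B ⊆ T) (hxB : x ∉ B) :
    w x * (1 - ∑ i ∈ B, w i) ≤ ∑ G ∈ T.powerset,
      if x ∈ G ∧ Disjoint G B then (∏ i ∈ G, w i) * ∏ i ∈ T \ G, (1 - w i) else 0 := by
  have e1 := Finset.prod_add (fun y => if y ∈ B then 0 else w y)
    (fun y => if y = x then 0 else 1 - w y) T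
  have e2 : ∏ y ∈ T, ((if y ∈ B then 0 else w y) + (if y = x then 0 else 1 - w y))
      = w x * ∏ i ∈ B, (1 - w i) := by
    rw [← mul_prod_erase T _ hx]
    congr 1
    · simp [hxB]
    · have hBs : B ⊆ T.erase x := fun y hy => mem_erase.2 ⟨fun h => hxB (h ▸ hy), hB hy⟩
      rw [← prod_subset hBs]
      · apply prod_congr rfl
        intro y hy
        have : y ≠ x := fun h => hxB (h ▸ hy)
        simp [hy, this]
      · intro y hy hyB
        simp [hyB, (mem_erase.1 hy).1]
  rw [e2] at e1
  have e3 : w x * (1 - ∑ i ∈ B, w i) ≤ w x * ∏ i ∈ B, (1 - w i) :=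
    mul_le_mul_of_nonneg_left (one_sub_sum_le_prod' B w h0 fun i hi => h1 i (hB hi)) (h0 x)
  refine e3.trans (e1.le.trans (sum_le_sum ?_))
  intro G hG
  have hGT := mem_powerset.1 hG
  split_ifs with hgood
  · apply le_of_eq
    congr 1
    · apply prod_congr rfl
      intro y hy
      have : y ∉ B := disjoint_left.1 hgood.2 hy
      simp [this]
    · apply prod_congr rfl
      intro y hy
      have : y ≠ x := fun h => (mem_sdiff.1 hy).2 (h ▸ hgood.1)
      simp [this]
  · apply le_of_eq
    by_cases hxG : x ∈ G
    · have : ¬ Disjoint G B := fun h => hgood ⟨hxG, h⟩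
      obtain ⟨y, hyG, hyB⟩ := not_disjoint_iff.1 this
      rw [prod_eq_zero hyG (by simp [hyB]), zero_mul]
    · rw [prod_eq_zero (i := x) (s := T \ G) (mem_sdiff.2 ⟨hx, hxG⟩) (by simp), mul_zero]

open Finset in
theorem exists_embed_of_family (S : Set ℕ) (n : ℕ) (hS : ∀ m ∈ S, 1 ≤ m ∧ m ≤ n)
    (𝒢 : Finset (Finset ℕ))
    (h : ∀ p k b : ℕ, p.Prime → p ^ k ≤ n → 1 ≤ b → b ≤ n → ¬ p ^ k ∣ b →
      ∃ G ∈ 𝒢, p ^ k ∈ G ∧ ∀ y ∈ G, ¬ y ∣ b) :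
    𝒢.card ∈ {d : ℕ | ∃ f : ℕ → Finset (Fin d), ∀ a ∈ S, ∀ b ∈ S, (f a ⊆ f b ↔ a ∣ b)} := by
  classical
  refine ⟨fun a => univ.filter (fun i => ∃ y ∈ (𝒢.equivFin.symm i).1, y ∣ a), ?_⟩
  intro a ha b hb
  constructor
  · intro hsub
    by_contra hab
    rw [Nat.dvd_iff_prime_pow_dvd_dvd] at hab
    push Not at hab
    obtain ⟨p, k, hp, hpa, hpb⟩ := hab
    obtain ⟨G, hG, hxG, hGb⟩ := h p k b hp
      ((Nat.le_of_dvd (hS a ha).1 hpa).trans (hS a ha).2) (hS b hb).1 (hS b hb).2 hpb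
    have h1 : 𝒢.equivFin ⟨G, hG⟩ ∈
        univ.filter (fun i => ∃ y ∈ (𝒢.equivFin.symm i).1, y ∣ a) := by
      simp only [mem_filter, mem_univ, true_and, Equiv.symm_apply_apply]
      exact ⟨_, hxG, hpa⟩
    have h2 := hsub h1
    simp only [mem_filter, mem_univ, true_and, Equiv.symm_apply_apply] at h2
    obtain ⟨y, hy, hyb⟩ := h2
    exact hGb y hy hyb
  · intro hab i hi
    simp only [mem_filter, mem_univ, true_and] at hi ⊢
    obtain ⟨y, hy, hya⟩ := hi
    exact ⟨y, hy, hya.trans hab⟩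

open Finset in
theorem embed_nonempty (S : Set ℕ) (n : ℕ) (hS : ∀ m ∈ S, 1 ≤ m ∧ m ≤ n) :
    {d : ℕ | ∃ f : ℕ → Finset (Fin d), ∀ a ∈ S, ∀ b ∈ S, (f a ⊆ f b ↔ a ∣ b)}.Nonempty := by
  classical
  refine ⟨_, exists_embed_of_family S n hS ((Icc 1 n).image fun y => {y}) ?_⟩
  intro p k b hp hpn _ _ hpb
  refine ⟨{p ^ k}, mem_image.2 ⟨p ^ k, mem_Icc.2 ⟨Nat.pos_of_ne_zero (pow_ne_zero _ hp.ne_zero), hpn⟩, rfl⟩,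
    by simp, by simpa using hpb⟩

open Finset ArithmeticFunction in
theorem upper_core (S : Set ℕ) (n : ℕ) (hn : 2 ≤ n) (hS : ∀ m ∈ S, 1 ≤ m ∧ m ≤ n)
    (Q d : ℕ) (lq : ℝ) (hlq : lq ≤ Real.log (Q + 1)) (hlqn : lq ≤ Real.log n)
    (hd : 2 * Real.log n < lq / (4 * Real.log n) * d) :
    divDim2 S ≤ d + Q * Nat.log 2 n := by
  classical
  have hL : 0 < Real.log n := Real.log_pos (by exact_mod_cast hn)
  set L := Real.log n with hLdef
  set w : ℕ → ℝ := fun y => vonMangoldt y / (2 * L) with hw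
  have hw0 : ∀ y, 0 ≤ w y := fun y => div_nonneg vonMangoldt_nonneg (by positivity)
  have hw1 : ∀ y ∈ Icc 1 n, w y ≤ 1 := by
    intro y hy
    rw [mem_Icc] at hy
    rw [hw]; simp only
    rw [div_le_one (by positivity)]
    have h1 : vonMangoldt y ≤ Real.log y := vonMangoldt_le_log
    have h2 : Real.log y ≤ L := Real.log_le_log (by exact_mod_cast hy.1) (by exact_mod_cast hy.2)
    linarith
  set P : Finset ℕ → ℝ := fun G => (∏ i ∈ G, w i) * ∏ i ∈ Icc 1 n \ G, (1 - w i) with hP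
  set X := (Icc 1 n ×ˢ Icc 1 n).filter
    (fun z => IsPrimePow z.1 ∧ Q < z.1.minFac ∧ ¬ z.1 ∣ z.2) with hX
  set good : Finset ℕ → ℕ × ℕ → Prop := fun G z => z.1 ∈ G ∧ Disjoint G z.2.divisors with hgood
  set δ := lq / (4 * L) with hδ
  have hδ1 : δ ≤ 1 := by
    rw [hδ, div_le_one (by positivity)]; linarith
  obtain ⟨F, hF, hFc, hFX⟩ := greedy_cover_s16 (Icc 1 n).powerset P
    (by
      intro G hG
      rw [mem_powerset] at hG
      refine mul_nonneg (prod_nonneg fun i _ => hw0 i) (prod_nonneg fun i hi => ?_)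
      have := hw1 i (mem_sdiff.1 hi).1
      linarith)
    (by
      rw [hP, ← Finset.prod_add]; simp) X good δ hδ1
    (by
      rintro ⟨x, b⟩ hz
      simp only [hX, mem_filter, mem_product] at hz
      obtain ⟨⟨hx, hb⟩, hxp, hxQ, hxb⟩ := hz
      have hb' := mem_Icc.1 hb
      have hr := random_subset (Icc 1 n) w hw0 hw1 x hx b.divisors
        (by
          intro y hy
          have := Nat.dvd_of_mem_divisors hy
          exact mem_Icc.2 ⟨Nat.pos_of_mem_divisors hy,
            (Nat.le_of_dvd hb'.1 this).trans hb'.2⟩)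
        (fun h => hxb (Nat.dvd_of_mem_divisors h))
      refine le_trans ?_ (hr.trans (le_of_eq ?_))
      · have h1 : ∑ i ∈ b.divisors, w i ≤ 1 / 2 := by
          rw [hw, ← sum_div, vonMangoldt_sum, div_le_iff₀ (by positivity)]
          have h2 : Real.log b ≤ L :=
            Real.log_le_log (by exact_mod_cast hb'.1) (by exact_mod_cast hb'.2)
          linarith
        have h2 : lq / (2 * L) ≤ w x := by
          rw [hw]; simp only
          rw [vonMangoldt_apply, if_pos hxp]
          gcongr
          refine hlq.trans (Real.log_le_log (by positivity) ?_)
          exact_mod_cast hxQ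
        have h3 : δ = lq / (2 * L) * (1 / 2) := by rw [hδ]; field_simp; norm_num
        rw [h3]
        have := hw0 x
        nlinarith
      · rfl) d
  have hempty : X.filter (fun x => ∀ ω ∈ F, ¬ good ω x) = ∅ := by
    rw [← card_eq_zero]
    have hlt : (((X.filter (fun x => ∀ ω ∈ F, ¬ good ω x)).card : ℕ) : ℝ) < 1 := by
      refine lt_of_le_of_lt hFX ?_
      have hXc : (X.card : ℝ) ≤ n * n := by
        have : X.card ≤ n * n := by
          refine (card_filter_le _ _).trans ?_
          simp
        exact_mod_cast this
      have hpow : (1 - δ) ^ d ≤ Real.exp (-(δ * d)) := by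
        have h1 : 1 - δ ≤ Real.exp (-δ) := by linarith [Real.add_one_le_exp (-δ)]
        calc (1 - δ) ^ d ≤ Real.exp (-δ) ^ d := pow_le_pow_left₀ (by linarith) h1 d
          _ = _ := by rw [← Real.exp_nat_mul]; congr 1; ring
      have hn2 : (n : ℝ) * n = Real.exp (2 * L) := by
        rw [two_mul, Real.exp_add, hLdef, Real.exp_log (by positivity)]
      calc (1 - δ) ^ d * (X.card : ℝ) ≤ Real.exp (-(δ * d)) * (n * n) :=
            mul_le_mul hpow hXc (by positivity) (by positivity)
        _ = Real.exp (-(δ * d) + 2 * L) := by rw [hn2, Real.exp_add]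
        _ < 1 := by rw [Real.exp_lt_one_iff]; linarith
    have : (X.filter (fun x => ∀ ω ∈ F, ¬ good ω x)).card < 1 := by exact_mod_cast hlt
    omega
  set F2 := (Icc 1 Q ×ˢ Icc 1 (Nat.log 2 n)).image (fun z => ({z.1 ^ z.2} : Finset ℕ)) with hF2
  have hmem := exists_embed_of_family S n hS (F ∪ F2) (by
    intro p k b hp hpn hb1 hbn hpb
    have hk : k ≠ 0 := by rintro rfl; simp at hpb
    by_cases hpQ : p ≤ Q
    · refine ⟨{p ^ k}, mem_union_right _ (mem_image.2 ⟨(p, k), ?_, rfl⟩), by simp, by simpa using hpb⟩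
      refine mem_product.2 ⟨mem_Icc.2 ⟨hp.one_lt.le, hpQ⟩, mem_Icc.2 ⟨Nat.pos_of_ne_zero hk, ?_⟩⟩
      exact Nat.le_log_of_pow_le (by norm_num) ((Nat.pow_le_pow_left hp.two_le k).trans hpn)
    · by_contra hcon
      push Not at hcon
      have : (p ^ k, b) ∈ X.filter (fun x => ∀ ω ∈ F, ¬ good ω x) := by
        refine mem_filter.2 ⟨mem_filter.2 ⟨mem_product.2 ⟨mem_Icc.2
          ⟨Nat.pos_of_ne_zero (pow_ne_zero _ hp.ne_zero), hpn⟩, mem_Icc.2 ⟨hb1, hbn⟩⟩, ?_, ?_, hpb⟩, ?_⟩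
        · exact hp.isPrimePow.pow hk
        · simp only [hp.pow_minFac hk]; omega
        · rintro G hG ⟨h1, h2⟩
          obtain ⟨y, hy, hyb⟩ := hcon G (mem_union_left _ hG) h1
          exact disjoint_left.1 h2 hy (Nat.mem_divisors.2 ⟨hyb, by omega⟩)
      rw [hempty] at this
      simp at this)
  refine (Nat.sInf_le hmem).trans ((card_union_le _ _).trans ?_)
  have : F2.card ≤ Q * Nat.log 2 n := by
    refine card_image_le.trans ?_
    simp
  omega

open Finset in
theorem lower_core (S : Set ℕ) (n M k Pm : ℕ) (hS : ∀ m ∈ S, 1 ≤ m ∧ m ≤ n) (hM : 1 ≤ M)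
    (hk : 1 ≤ k) (hmem : ∀ m, 1 ≤ m → m ≤ Pm ^ k → M * m ∈ S) :
    Nat.primeCounting Pm ≤ divDim2 S + k ∨ (k + 1) * (k + 2) ≤ 2 * divDim2 S := by
  classical
  obtain ⟨f, hf⟩ := Nat.sInf_mem (embed_nonempty S n hS)
  change ℕ → Finset (Fin (divDim2 S)) at f
  rw [← Nat.primesLE_card_eq_primeCounting]
  have hpr : ∀ q ∈ Nat.primesLE Pm, q.Prime ∧ q ≤ Pm := fun q hq =>
    ⟨Nat.prime_of_mem_primesLE hq, Nat.le_of_mem_primesLE hq⟩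
  have hqS : ∀ q ∈ Nat.primesLE Pm, M * q ∈ S := fun q hq =>
    hmem q (hpr q hq).1.one_lt.le ((hpr q hq).2.trans (Nat.le_self_pow (by omega) _))
  refine cover_free_bound (fun p => f (M * p)) _ k ?_
  intro p hp B hB hBk hpB hsub
  have hPm : 1 ≤ Pm := (hpr p hp).1.one_lt.le.trans (hpr p hp).2
  have hBS : M * ∏ q ∈ B, q ∈ S := by
    apply hmem
    · exact Nat.pos_of_ne_zero (prod_ne_zero_iff.2 fun q hq => (hpr q (hB hq)).1.ne_zero)
    · calc ∏ q ∈ B, q ≤ Pm ^ B.card := prod_le_pow_card _ _ _ fun q hq => (hpr q (hB hq)).2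
        _ ≤ Pm ^ k := Nat.pow_le_pow_right hPm hBk
  have h1 : f (M * p) ⊆ f (M * ∏ q ∈ B, q) := by
    refine hsub.trans (biUnion_subset.2 fun q hq => ?_)
    exact (hf _ (hqS q (hB hq)) _ hBS).2 (Nat.mul_dvd_mul_left _ (dvd_prod_of_mem _ hq))
  have h2 := Nat.dvd_of_mul_dvd_mul_left (by omega) ((hf _ (hqS p hp) _ hBS).1 h1)
  obtain ⟨q, hq, hpq⟩ := ((hpr p hp).1.prime.dvd_finsetProd_iff _).1 h2
  rw [(Nat.prime_dvd_prime_iff_eq (hpr p hp).1 (hpr q (hB hq)).1).1 hpq] at hpB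
  exact hpB hq

theorem upper_final_s16 (S : Set ℕ) (n : ℕ) (hn : 2 ≤ n) (hS : ∀ m ∈ S, 1 ≤ m ∧ m ≤ n)
    (h1 : 1 ≤ Real.log (Real.log n)) (h2 : Real.log (Real.log n) ≤ √(Real.log n) / 20) :
    (divDim2 S : ℝ) ≤ 17 * Real.log n ^ 2 / Real.log (Real.log n) := by
  have hL : 0 < Real.log n := Real.log_pos (by exact_mod_cast hn)
  have hlog2n : (Nat.log 2 n : ℝ) ≤ 2 * Real.log n := by
    have e1 : (2 : ℝ) ^ (Nat.log 2 n) ≤ n := by exact_mod_cast Nat.pow_log_le_self 2 (by omega)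
    have e2 := Real.log_le_log (by positivity) e1
    rw [Real.log_pow] at e2
    have := Real.log_two_gt_d9
    have e3 : (0 : ℝ) ≤ Nat.log 2 n := by positivity
    nlinarith
  set L := Real.log n with hLd
  set l := Real.log L with hl
  set s := √L with hs
  have hsL : s ^ 2 = L := Real.sq_sqrt hL.le
  have hs0 : 0 < s := Real.sqrt_pos.2 hL
  have hlog : l = 2 * Real.log s := by rw [hl, ← hsL, Real.log_pow]; norm_num
  have hcore := upper_core S n hn hS ⌊s⌋₊ (⌈16 * L ^ 2 / l⌉₊ + 1) (l / 2)
    (by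
      have : Real.log s ≤ Real.log (⌊s⌋₊ + 1) := Real.log_le_log hs0 (Nat.lt_floor_add_one s).le
      linarith)
    (by
      have : l ≤ L - 1 := Real.log_le_sub_one_of_pos hL
      linarith)
    (by
      have e1 : 16 * L ^ 2 / l ≤ ⌈16 * L ^ 2 / l⌉₊ := Nat.le_ceil _
      rw [← hLd]
      push_cast
      have e2 : l / 2 / (4 * L) * (16 * L ^ 2 / l + 1) = 2 * L + l / (8 * L) := by
        field_simp
        ring
      have e3 : 0 < l / (8 * L) := by positivity
      have e4 : l / 2 / (4 * L) * (16 * L ^ 2 / l + 1)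
          ≤ l / 2 / (4 * L) * (⌈16 * L ^ 2 / l⌉₊ + 1) := by gcongr
      linarith)
  have hc : (divDim2 S : ℝ) ≤ (⌈16 * L ^ 2 / l⌉₊ + 1) + ⌊s⌋₊ * Nat.log 2 n := by exact_mod_cast hcore
  have e1 : (⌈16 * L ^ 2 / l⌉₊ : ℝ) < 16 * L ^ 2 / l + 1 := Nat.ceil_lt_add_one (by positivity)
  have e2 : (⌊s⌋₊ : ℝ) * Nat.log 2 n ≤ s * (2 * L) := by
    gcongr
    exact Nat.floor_le hs0.le
  have e3 : 2 + s * (2 * L) ≤ L ^ 2 / l := by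
    rw [le_div_iff₀ (by linarith), ← hsL]
    have hs20 : 20 ≤ s := by linarith
    calc (2 + s * (2 * s ^ 2)) * l ≤ (2 + s * (2 * s ^ 2)) * (s / 20) := by gcongr
      _ ≤ (s ^ 2) ^ 2 := by nlinarith [pow_pos hs0 3, pow_pos hs0 4, pow_pos hs0 2]
  have e4 : 17 * L ^ 2 / l = 16 * L ^ 2 / l + L ^ 2 / l := by ring
  linarith

set_option maxHeartbeats 1000000 in
theorem lower_final_s16 (α : ℝ) (hα0 : 0 < α) (hα1 : α < 1) (n : ℕ) (hn : 2 ≤ n)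
    (h1 : 1 ≤ Real.log (Real.log n)) (h2 : Real.log (Real.log n) ≤ √(Real.log n) / 20)
    (h3 : 2 / (1 - α) ≤ √(Real.log n)) :
    (1 - α) ^ 2 / 16 * (Real.log n) ^ 2 / (Real.log (Real.log n)) ^ 2
      ≤ (divDim2 {m : ℕ | (n : ℝ) ^ α < (m : ℝ) ∧ m ≤ n} : ℝ) := by
  have hL : 0 < Real.log n := Real.log_pos (by exact_mod_cast hn)
  have hn0 : (0 : ℝ) < n := by positivity
  have hnL : (n : ℝ) = Real.exp (Real.log n) := (Real.exp_log hn0).symm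
  have hna : (n : ℝ) ^ α = Real.exp (α * Real.log n) := by
    rw [Real.rpow_def_of_pos hn0, mul_comm]
  set L := Real.log n with hLd
  set l := Real.log L with hl
  set s := √L with hs
  have hsL : s ^ 2 = L := Real.sq_sqrt hL.le
  have hs0 : 0 < s := Real.sqrt_pos.2 hL
  have hlog : l = 2 * Real.log s := by rw [hl, ← hsL, Real.log_pow]; norm_num
  have hs20 : 20 ≤ s := by linarith
  have ha : 0 < 1 - α := by linarith
  set x := s ^ 5 with hx
  have hx0 : 0 < x := by positivity
  have hxlog : Real.log x = 5 / 2 * l := by rw [hx, Real.log_pow, hlog]; push_cast; ring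
  have hxs : 20 * s ≤ x := by
    have : (20 : ℝ) ^ 4 ≤ s ^ 4 := pow_le_pow_left₀ (by norm_num) hs20 4
    rw [hx, pow_succ]; nlinarith
  -- prime count
  have hpi : 2 * L ^ 2 ≤ (Nat.primeCounting ⌊x⌋₊ : ℝ) := by
    have e1 := Chebyshev.psi_ge' hx0.le
    have e2 := Chebyshev.psi_le_primeCounting_mul_log' x
    have e3 : Real.log (x + 2) ≤ x / 4 := by
      have : Real.log (x + 2) ≤ Real.log (x ^ 2) := Real.log_le_log (by linarith) (by nlinarith)
      rw [Real.log_pow, hxlog] at this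
      push_cast at this
      linarith
    rw [hxlog] at e2
    have e4 := Real.log_two_gt_d9
    have e5 : 1 / 4 * x ≤ (Nat.primeCounting ⌊x⌋₊ : ℝ) * (5 / 2 * l) := by nlinarith
    have e6 : 2 * L ^ 2 * (5 / 2 * l) ≤ 1 / 4 * x := by
      rw [← hsL, hx]
      calc 2 * (s ^ 2) ^ 2 * (5 / 2 * l) ≤ 2 * (s ^ 2) ^ 2 * (5 / 2 * (s / 20)) := by gcongr
        _ = 1 / 4 * s ^ 5 := by ring
    exact le_of_mul_le_mul_right (e6.trans e5) (by linarith)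
  set z := (1 - α) * L / l with hz
  have hz40 : 40 ≤ z := by
    rw [hz, le_div_iff₀ (by linarith)]
    rw [div_le_iff₀ ha] at h3
    rw [← hsL]
    nlinarith
  set y := ((1 - α) * L - Real.log 2) / (5 / 2 * l) with hy
  have hl2 := Real.log_two_lt_d9
  have hl2' := Real.log_two_gt_d9
  have hyz : 2 / 5 * z - 1 ≤ y := by
    have : y = 2 / 5 * z - Real.log 2 / (5 / 2 * l) := by
      rw [hy, hz]; field_simp
    have h' : Real.log 2 / (5 / 2 * l) ≤ 1 := by
      rw [div_le_one (by linarith)]; linarith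
    linarith
  set k := ⌊y⌋₊ with hk
  have hy0 : 0 ≤ y := by linarith
  have hky : (k : ℝ) ≤ y := Nat.floor_le hy0
  have hyk : y < k + 1 := Nat.lt_floor_add_one y
  have hk1 : 1 ≤ k := Nat.le_floor (by push_cast; linarith)
  have hkl : k * (5 / 2 * l) ≤ (1 - α) * L - Real.log 2 := by
    rw [hy, le_div_iff₀ (by linarith)] at hky
    exact hky
  have hna1 : 1 ≤ (n : ℝ) ^ α := by
    rw [hna]; exact Real.one_le_exp (by positivity)
  have hcore := lower_core {m : ℕ | (n : ℝ) ^ α < (m : ℝ) ∧ m ≤ n} n (⌊(n : ℝ) ^ α⌋₊ + 1) k ⌊x⌋₊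
    (by
      rintro m ⟨hm1, hm2⟩
      refine ⟨?_, hm2⟩
      have : (1 : ℝ) < m := lt_of_le_of_lt hna1 hm1
      exact_mod_cast this.le) (by omega) hk1
    (by
      intro m hm1 hm2
      have hm1' : (1 : ℝ) ≤ m := by exact_mod_cast hm1
      refine ⟨?_, ?_⟩
      · push_cast
        have := Nat.lt_floor_add_one ((n : ℝ) ^ α)
        nlinarith
      · have e1 : (m : ℝ) ≤ x ^ k := by
          have : (m : ℝ) ≤ (⌊x⌋₊ : ℝ) ^ k := by exact_mod_cast hm2
          refine this.trans (pow_le_pow_left₀ (by positivity) (Nat.floor_le hx0.le) k)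
        have e2 : x ^ k ≤ Real.exp ((1 - α) * L - Real.log 2) := by
          rw [← Real.exp_log hx0, ← Real.exp_nat_mul, hxlog]
          exact Real.exp_le_exp.2 hkl
        have e3 : ((⌊(n : ℝ) ^ α⌋₊ : ℝ) + 1) ≤ 2 * (n : ℝ) ^ α := by
          have := Nat.floor_le (zero_le_one.trans hna1)
          linarith
        have e4 : ((⌊(n : ℝ) ^ α⌋₊ : ℝ) + 1) * m ≤ n := by
          calc ((⌊(n : ℝ) ^ α⌋₊ : ℝ) + 1) * m
              ≤ (2 * (n : ℝ) ^ α) * Real.exp ((1 - α) * L - Real.log 2) :=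
                mul_le_mul e3 (e1.trans e2) (by positivity) (by positivity)
            _ = Real.exp (Real.log 2) * Real.exp (α * L) * Real.exp ((1 - α) * L - Real.log 2) := by
                rw [hna, Real.exp_log (by norm_num)]
            _ = Real.exp L := by
                rw [← Real.exp_add, ← Real.exp_add]; congr 1; ring
            _ = n := hnL.symm
        exact_mod_cast e4)
  set D := divDim2 {m : ℕ | (n : ℝ) ^ α < (m : ℝ) ∧ m ≤ n} with hD
  have hgoal : (1 - α) ^ 2 / 16 * L ^ 2 / l ^ 2 = z ^ 2 / 16 := by
    rw [hz]; field_simp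
  rw [hgoal]
  rcases hcore with hc | hc
  · have hc' : (Nat.primeCounting ⌊x⌋₊ : ℝ) ≤ D + k := by exact_mod_cast hc
    have hzL : z ≤ L := by
      rw [hz, div_le_iff₀ (by linarith)]; nlinarith
    have hkz : (k : ℝ) ≤ z := by
      have : y ≤ z := by
        rw [hy, hz]
        apply div_le_div₀ (by positivity) (by linarith) (by linarith) (by linarith)
      linarith
    have hzz : z ^ 2 ≤ L ^ 2 := pow_le_pow_left₀ (by linarith) hzL 2
    have hz2 : z ≤ z ^ 2 := by rw [pow_two]; exact le_mul_of_one_le_left (by linarith) (by linarith)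
    have hz3 : 0 ≤ z ^ 2 := sq_nonneg z
    linarith
  · have hc' : ((k : ℝ) + 1) * (k + 2) ≤ 2 * D := by exact_mod_cast hc
    have e1 : 9 / 25 * z ≤ k + 1 := by linarith
    have e2 : (9 / 25 * z) * (9 / 25 * z) ≤ ((k : ℝ) + 1) * (k + 2) :=
      mul_le_mul e1 (by linarith) (by linarith) (by linarith)
    have hz3 : 0 ≤ z ^ 2 := sq_nonneg z
    have e3 : (9 / 25 * z) * (9 / 25 * z) = 81 / 625 * z ^ 2 := by ring
    linarith

/-- For fixed `α ∈ (0,1)`, for every `ε > 0` and all large `n`,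
`((1-α)²/16 - ε) (log n)²/(log log n)² ≤ dim₂(D_{(n^α, n]})
  ≤ ((4/3) e π² + ε) (log n)²/log log n`. -/
theorem divDim2_Ioc_rpow_bounds (α : ℝ) (hα0 : 0 < α) (hα1 : α < 1) :
    ∀ ε : ℝ, 0 < ε → ∃ N : ℕ, ∀ n : ℕ, N ≤ n →
      ((1 - α) ^ 2 / 16 - ε) * (Real.log n) ^ 2 / (Real.log (Real.log n)) ^ 2
          ≤ (divDim2 {m : ℕ | (n : ℝ) ^ α < (m : ℝ) ∧ m ≤ n} : ℝ) ∧
        (divDim2 {m : ℕ | (n : ℝ) ^ α < (m : ℝ) ∧ m ≤ n} : ℝ)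
          ≤ ((4 / 3) * Real.exp 1 * Real.pi ^ 2 + ε) * (Real.log n) ^ 2
              / Real.log (Real.log n) := by
  intro ε hε
  have t1 : Filter.Tendsto (fun n : ℕ => Real.log (n : ℝ)) Filter.atTop Filter.atTop :=
    Real.tendsto_log_atTop.comp tendsto_natCast_atTop_atTop
  have c1 : ∀ᶠ n : ℕ in Filter.atTop, 1 ≤ Real.log (Real.log (n : ℝ)) :=
    (Real.tendsto_log_atTop.comp t1).eventually_ge_atTop 1
  have c2 : ∀ᶠ n : ℕ in Filter.atTop, Real.log (Real.log (n : ℝ)) ≤ √(Real.log (n : ℝ)) / 20 := by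
    have h := (isLittleO_log_rpow_atTop (r := 1 / 2) (by norm_num)).bound
      (c := 1 / 20) (by norm_num)
    filter_upwards [t1.eventually h] with n hn
    rw [← Real.sqrt_eq_rpow, Real.norm_eq_abs, Real.norm_eq_abs, abs_of_nonneg (Real.sqrt_nonneg _)] at hn
    linarith [le_abs_self (Real.log (Real.log (n : ℝ)))]
  have c3 : ∀ᶠ n : ℕ in Filter.atTop, 2 / (1 - α) ≤ √(Real.log (n : ℝ)) :=
    (Real.tendsto_sqrt_atTop.comp t1).eventually_ge_atTop _
  obtain ⟨N, hN⟩ := Filter.eventually_atTop.1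
    (c1.and (c2.and (c3.and (Filter.eventually_ge_atTop 2))))
  refine ⟨N, fun n hn => ?_⟩
  obtain ⟨h1, h2, h3, hn2⟩ := hN n hn
  have hl : 0 < Real.log (Real.log (n : ℝ)) := by linarith
  constructor
  · refine le_trans ?_ (lower_final_s16 α hα0 hα1 n hn2 h1 h2 h3)
    gcongr
    linarith
  · refine (upper_final_s16 _ n hn2 ?_ h1 h2).trans ?_
    · rintro m ⟨hm1, hm2⟩
      refine ⟨?_, hm2⟩
      have h0 : (0 : ℝ) ≤ (n : ℝ) ^ α := by positivity
      have : (0 : ℝ) < m := lt_of_le_of_lt h0 hm1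
      exact_mod_cast this
    · gcongr
      have := Real.exp_one_gt_d9
      have := Real.pi_gt_three
      nlinarith [mul_pos (Real.exp_pos 1) Real.pi_pos]
end

section
/- Fix positive integers a and b. For every ε > 0 there exists N such that for all n ≥ N, the 2-dimension of the divisibility poset on the arithmetic progression a[n] + b = {ak + b : k ∈ {1,…,n}} satisfies (1/16 − ε)·(log n)²/(log log n)² ≤ dim₂(D_{a[n]+b}) ≤ ((4/3)·e·π² + ε)·(log n)²/(log log n). -/
lemma aux_union {P Ω : Type*} [Fintype P] [Fintype Ω] [Nonempty Ω]
    (good : P → Ω → Prop) (δ : ℝ) (d : ℕ)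
    (h : ∀ p, (Fintype.card Ω : ℝ) * δ ≤ Nat.card {w // good p w})
    (hd : (Fintype.card P : ℝ) * (1 - δ) ^ d < 1) :
    ∃ w : Fin d → Ω, ∀ p, ∃ t, good p (w t) := by
  classical
  by_contra! hcon
  have hsub : (Finset.univ : Finset (Fin d → Ω)) ⊆ Finset.univ.biUnion
      (fun p : P => Fintype.piFinset (fun _ : Fin d => Finset.univ.filter (fun w => ¬ good p w))) := by
    intro w _
    obtain ⟨p, hp⟩ := hcon w
    simp only [Finset.mem_biUnion, Finset.mem_univ, true_and, Fintype.mem_piFinset,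
      Finset.mem_filter]
    exact ⟨p, hp⟩
  have h1 := (Finset.card_le_card hsub).trans Finset.card_biUnion_le
  simp only [Fintype.card_piFinset_const, Finset.card_univ, Fintype.card_fun, Fintype.card_fin] at h1
  have hΩ : (0 : ℝ) < Fintype.card Ω := by exact_mod_cast Fintype.card_pos
  have h2 : ∀ p, (((Finset.univ.filter (fun w => ¬ good p w)).card : ℝ)) ≤
      (1 - δ) * Fintype.card Ω := by
    intro p
    have := h p
    rw [Nat.card_eq_fintype_card, Fintype.card_subtype] at this
    have h3 := Finset.card_filter_add_card_filter_not (s := (Finset.univ : Finset Ω)) (good p)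
    rw [Finset.card_univ] at h3
    have h4 : ((Finset.univ.filter (fun w => good p w)).card : ℝ) +
      ((Finset.univ.filter (fun w => ¬ good p w)).card : ℝ) = Fintype.card Ω := by exact_mod_cast h3
    linarith
  have h5 : ((Fintype.card Ω : ℝ)) ^ d ≤ ∑ p : P, ((1 - δ) * Fintype.card Ω) ^ d := by
    calc ((Fintype.card Ω : ℝ)) ^ d ≤
        ((∑ p : P, (Finset.univ.filter (fun w => ¬ good p w)).card ^ d : ℕ) : ℝ) := by exact_mod_cast h1
      _ ≤ _ := by
        push_cast
        apply Finset.sum_le_sum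
        intro p _
        exact pow_le_pow_left₀ (by positivity) (h2 p) d
  simp only [Finset.sum_const, Finset.card_univ, nsmul_eq_mul, mul_pow] at h5
  have h6 : 0 < (Fintype.card Ω : ℝ) ^ d := by positivity
  nlinarith

lemma aux_single (N k : ℕ) (hk : 1 ≤ k) (q : Fin N) (F : Finset (Fin N)) (hq : q ∉ F)
    (hF : F.card ≤ k) :
    (Fintype.card (Fin N → Fin (2 * k)) : ℝ) * (1 / (4 * k)) ≤
      Nat.card {g : Fin N → Fin (2 * k) // (g q).val = 0 ∧ ∀ x ∈ F, (g x).val ≠ 0} := by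
  classical
  have : NeZero (2 * k) := ⟨by omega⟩
  set s : Fin N → Finset (Fin (2 * k)) := fun i =>
    if i = q then {0} else if i ∈ F then Finset.univ.erase 0 else Finset.univ with hs
  have hsub : Fintype.piFinset s ⊆ Finset.univ.filter
      (fun g : Fin N → Fin (2 * k) => (g q).val = 0 ∧ ∀ x ∈ F, (g x).val ≠ 0) := by
    intro g hg
    rw [Fintype.mem_piFinset] at hg
    simp only [Finset.mem_filter, Finset.mem_univ, true_and]
    constructor
    · have := hg q
      simp only [hs, if_true, Finset.mem_singleton] at this
      simp [this]
    · intro x hx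
      have := hg x
      have hxq : x ≠ q := fun h => hq (h ▸ hx)
      simp only [hs, if_neg hxq, if_pos hx, Finset.mem_erase, Finset.mem_univ, and_true] at this
      intro h0
      exact this (Fin.ext (by simpa using h0))
  have h1 := Finset.card_le_card hsub
  rw [Nat.card_eq_fintype_card, Fintype.card_subtype]
  refine le_trans ?_ (Nat.cast_le.mpr h1)
  rw [Fintype.card_piFinset]
  have hk' : (1 : ℝ) ≤ k := by exact_mod_cast hk
  have hcard : ∀ i, ((s i).card : ℝ) = (2 * k) *
      ((if i = q then 1 / (2 * k : ℝ) else 1) * (if i ∈ F then 1 - 1 / (2 * k : ℝ) else 1)) := by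
    intro i
    by_cases hi : i = q
    · have : i ∉ F := hi ▸ hq
      simp only [hs, if_pos hi, if_neg this, Finset.card_singleton]
      field_simp
      norm_num
    · by_cases hi2 : i ∈ F
      · simp only [hs, if_neg hi, if_pos hi2]
        rw [Finset.card_erase_of_mem (Finset.mem_univ _)]
        simp only [Finset.card_univ, Fintype.card_fin]
        rw [Nat.cast_sub (by omega)]
        push_cast
        field_simp
      · simp [hs, if_neg hi, if_neg hi2]
  rw [Nat.cast_prod, Finset.prod_congr rfl (fun i _ => hcard i),
    Finset.prod_mul_distrib (f := fun _ => (2 * k : ℝ)), Finset.prod_mul_distrib (f := fun i => if i = q then 1 / (2 * k : ℝ) else 1)]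
  have e1 : ∏ i : Fin N, (if i = q then 1 / (2 * k : ℝ) else 1) = 1 / (2 * k) := by
    simp
  have e2 : ∏ i : Fin N, (if i ∈ F then 1 - 1 / (2 * k : ℝ) else 1) = (1 - 1 / (2 * k)) ^ F.card := by
    simp [Finset.prod_ite_mem]
  rw [e1, e2]
  have e3 : (1 / 2 : ℝ) ≤ (1 - 1 / (2 * k : ℝ)) ^ F.card := by
    have hb := one_add_mul_le_pow (a := - (1 / (2 * k : ℝ))) (by
      have : 1 / (2 * k : ℝ) ≤ 1 := by rw [div_le_one (by positivity)]; linarith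
      linarith) F.card
    have hF' : (F.card : ℝ) ≤ k := by exact_mod_cast hF
    have h6 : (F.card : ℝ) * (1 / (2 * k)) ≤ 1 / 2 := by
      rw [mul_one_div, div_le_iff₀ (by positivity)]; linarith
    rw [sub_eq_add_neg]
    linarith
  simp only [Finset.prod_const, Finset.card_univ, Fintype.card_fin, Fintype.card_fun]
  push_cast
  have : (2 * k : ℝ) ^ N * (1 / (4 * k)) = (2 * k : ℝ) ^ N * (1 / (2 * k) * (1 / 2)) := by
    congr 1; field_simp; norm_num
  rw [this]
  gcongr

lemma aux_count (y v k M : ℕ) (hv : 0 < v) (hvM : v ≤ M) (hM : M < (y + 1) ^ (k + 1))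
    (F : Finset ℕ) (hF : ∀ q ∈ F, q ∣ v ∧ ∃ p j, p.Prime ∧ y < p ∧ 1 ≤ j ∧ q = p ^ j) :
    F.card ≤ k := by
  classical
  set T := v.primeFactors.filter (fun p => y < p) with hT
  have hsub : F ⊆ (T.sigma (fun p => Finset.Icc 1 (v.factorization p))).image
      (fun x => x.1 ^ x.2) := by
    intro q hq
    obtain ⟨hqv, p, j, hp, hy, hj, rfl⟩ := hF q hq
    simp only [Finset.mem_image, Finset.mem_sigma, Finset.mem_Icc, hT, Finset.mem_filter]
    refine ⟨⟨p, j⟩, ⟨⟨?_, hy⟩, hj, ?_⟩, rfl⟩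
    · exact Nat.mem_primeFactors.mpr ⟨hp, (dvd_pow_self p (by omega)).trans hqv, hv.ne'⟩
    · exact (hp.pow_dvd_iff_le_factorization hv.ne').mp hqv
  have h1 : F.card ≤ ∑ p ∈ T, v.factorization p := by
    refine (Finset.card_le_card hsub).trans (Finset.card_image_le.trans ?_)
    rw [Finset.card_sigma]
    simp
  have h2 : (y + 1) ^ (∑ p ∈ T, v.factorization p) ≤ v := by
    rw [← Finset.prod_pow_eq_pow_sum]
    calc ∏ p ∈ T, (y + 1) ^ v.factorization p ≤ ∏ p ∈ T, p ^ v.factorization p := by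
          apply Finset.prod_le_prod' 
          intro p hp
          exact Nat.pow_le_pow_left (Finset.mem_filter.mp hp).2 _
      _ ≤ ∏ p ∈ v.primeFactors, p ^ v.factorization p := by
          apply Finset.prod_le_prod_of_subset_of_one_le' (Finset.filter_subset _ _)
          intro p hp _
          exact Nat.one_le_pow _ _ (Nat.pos_of_mem_primeFactors hp)
      _ = v := Nat.prod_factorization_pow_eq_self hv.ne'
  have h3 : (y + 1) ^ F.card < (y + 1) ^ (k + 1) :=
    lt_of_le_of_lt ((Nat.pow_le_pow_right (by omega) h1).trans (h2.trans hvM)) hM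
  by_contra hcon
  exact absurd (Nat.pow_le_pow_right (by omega : 0 < y + 1) (by omega : k + 1 ≤ F.card)) (by omega)

lemma aux_upper (M y k d : ℕ) (hk : 1 ≤ k) (hM : M < (y + 1) ^ (k + 1))
    (hd : ((M : ℝ) + 1) ^ 2 * (1 - 1 / (4 * k)) ^ d < 1) (S : Set ℕ)
    (hS : ∀ m ∈ S, 0 < m ∧ m ≤ M) :
    (y + 1) * (Nat.log 2 M + 1) + d ∈
      {d : ℕ | ∃ f : ℕ → Finset (Fin d), ∀ a ∈ S, ∀ b ∈ S, (f a ⊆ f b ↔ a ∣ b)} := by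
  classical
  set Q : Finset (Fin (M + 1)) := Finset.univ.filter
    (fun q => ∃ p j, p.Prime ∧ y < p ∧ 1 ≤ j ∧ q.val = p ^ j) with hQ
  set Fv : Fin (M + 1) → Finset (Fin (M + 1)) := fun v => Q.filter (fun q => q.val ∣ v.val) with hFv
  have : NeZero (2 * k) := ⟨by omega⟩
  obtain ⟨g, hg⟩ := aux_union (P := {x : Fin (M + 1) × Fin (M + 1) // x.1 ∉ Fv x.2 ∧ 0 < x.2.val})
    (Ω := Fin (M + 1) → Fin (2 * k))
    (fun x g => (g x.1.1).val = 0 ∧ ∀ z ∈ Fv x.1.2, (g z).val ≠ 0) (1 / (4 * k)) d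
    (by
      rintro ⟨⟨q, v⟩, hq, hv⟩
      refine aux_single (M + 1) k hk q (Fv v) hq ?_
      rw [← Finset.card_map Fin.valEmbedding]
      refine aux_count y v k M hv (by omega) hM _ ?_
      intro q hq
      simp only [Finset.mem_map, hFv, hQ, Finset.mem_filter, Finset.mem_univ, true_and] at hq
      obtain ⟨q', ⟨⟨p, j, h⟩, h2⟩, rfl⟩ := hq
      exact ⟨h2, p, j, h⟩)
    (by
      refine lt_of_le_of_lt ?_ hd
      have hk' : (1 : ℝ) ≤ k := by exact_mod_cast hk
      have h1 : (0 : ℝ) ≤ 1 - 1 / (4 * k) := by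
        have : 1 / (4 * k : ℝ) ≤ 1 := by rw [div_le_one (by positivity)]; linarith
        linarith
      have h2 := Fintype.card_subtype_le (fun x : Fin (M + 1) × Fin (M + 1) => x.1 ∉ Fv x.2 ∧ 0 < x.2.val)
      simp only [Fintype.card_prod, Fintype.card_fin] at h2
      have h3 : (Fintype.card {x : Fin (M + 1) × Fin (M + 1) // x.1 ∉ Fv x.2 ∧ 0 < x.2.val} : ℝ)
        ≤ ((M : ℝ) + 1) ^ 2 := by
        rw [sq]; exact_mod_cast h2
      gcongr)
  set α := (Fin (y + 1) × Fin (Nat.log 2 M + 1)) ⊕ Fin d with hα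
  have hcard : Fintype.card α = (y + 1) * (Nat.log 2 M + 1) + d := by simp [hα]
  let e : α ≃ Fin ((y + 1) * (Nat.log 2 M + 1) + d) := Fintype.equivFinOfCardEq hcard
  let f : ℕ → Finset α := fun m => Finset.univ.filter (fun c => match c with
    | .inl x => x.1.val ^ x.2.val ∣ m
    | .inr t => ∃ q ∈ Q, (g t q).val = 0 ∧ q.val ∣ m)
  refine ⟨fun m => (f m).map e.toEmbedding, ?_⟩
  intro u hu v hv
  rw [Finset.map_subset_map]
  obtain ⟨hu0, huM⟩ := hS u hu
  obtain ⟨hv0, hvM⟩ := hS v hv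
  constructor
  · intro h
    rw [Nat.dvd_iff_prime_pow_dvd_dvd]
    intro p j hp hpu
    by_contra hpv
    have hj : 1 ≤ j := by
      rcases Nat.eq_zero_or_pos j with rfl | h
      · simp at hpv
      · exact h
    have hle : p ^ j ≤ M := (Nat.le_of_dvd hu0 hpu).trans huM
    by_cases hpy : p ≤ y
    · have hjl : j ≤ Nat.log 2 M :=
        Nat.le_log_of_pow_le (by norm_num) ((Nat.pow_le_pow_left hp.two_le j).trans hle)
      have h1 : (Sum.inl (⟨p, by omega⟩, ⟨j, by omega⟩) : α) ∈ f u := by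
        simp [f, hpu]
      have h2 := h h1
      simp [f, hpv] at h2
    · set q : Fin (M + 1) := ⟨p ^ j, by omega⟩ with hq
      have hqQ : q ∈ Q := by
        simp only [hQ, Finset.mem_filter, Finset.mem_univ, true_and]
        exact ⟨p, j, hp, by omega, hj, rfl⟩
      obtain ⟨t, ht0, ht⟩ := hg ⟨(q, ⟨v, by omega⟩), by
        simp only [hFv, Finset.mem_filter]
        exact fun h => hpv h.2, hv0⟩
      have h1 : (Sum.inr t : α) ∈ f u := by
        simp only [f, Finset.mem_filter, Finset.mem_univ, true_and]
        exact ⟨q, hqQ, ht0, hpu⟩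
      have h2 := h h1
      simp only [f, Finset.mem_filter, Finset.mem_univ, true_and] at h2
      obtain ⟨z, hzQ, hz0, hzv⟩ := h2
      exact ht z (by simp only [hFv, Finset.mem_filter]; exact ⟨hzQ, hzv⟩) hz0
  · intro h c hc
    rcases c with x | t
    · simp only [f, Finset.mem_filter, Finset.mem_univ, true_and] at hc ⊢
      exact hc.trans h
    · simp only [f, Finset.mem_filter, Finset.mem_univ, true_and] at hc ⊢
      obtain ⟨q, h1, h2, h3⟩ := hc
      exact ⟨q, h1, h2, h3.trans h⟩

lemma aux_cover {β γ : Type*} [DecidableEq β] [DecidableEq γ] (r : ℕ) : ∀ (I : Finset β) (B : β → Finset γ),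
    (∀ i ∈ I, ∀ R ⊆ I.erase i, R.card ≤ r → ¬ B i ⊆ R.biUnion B) →
    min I.card ((r + 2).choose 2) ≤ (I.biUnion B).card := by
  induction r with
  | zero =>
    intro I B h
    rcases I.eq_empty_or_nonempty with rfl | ⟨i, hi⟩
    · simp
    · have := h i hi ∅ (by simp) (by simp)
      have h1 : (B i).Nonempty := by
        rw [Finset.nonempty_iff_ne_empty]; intro h0; simp [h0] at this
      have h2 : 1 ≤ (B i).card := h1.card_pos
      have h3 := Finset.card_le_card (Finset.subset_biUnion_of_mem B hi)
      simp
      right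
      obtain ⟨x, hx⟩ := h1
      exact ⟨i, hi, x, hx⟩
  | succ r ih =>
    intro I B h
    by_cases hpriv : ∀ i ∈ I, ∃ x ∈ B i, ∀ j ∈ I, x ∈ B j → j = i
    · rcases I.eq_empty_or_nonempty with rfl | ⟨i0, hi0⟩
      · simp
      have : Nonempty γ := ⟨(hpriv i0 hi0).choose⟩
      choose! φ hφ1 hφ2 using hpriv
      refine (min_le_left _ _).trans ?_
      refine Finset.card_le_card_of_injOn φ ?_ ?_
      · intro i hi
        exact Finset.mem_coe.mpr (Finset.mem_biUnion.mpr ⟨i, hi, hφ1 i hi⟩)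
      · intro i hi j hj hij
        exact hφ2 j hj i hi (hij ▸ hφ1 i hi)
    · push Not at hpriv
      obtain ⟨i, hi, hi2⟩ := hpriv
      have : Nonempty β := ⟨i⟩
      choose! ψ hψ1 hψ2 hψ3 using hi2
      have hbig : r + 2 ≤ (B i).card := by
        by_contra hlt
        refine h i hi ((B i).image ψ) ?_ ?_ ?_
        · intro j hj
          obtain ⟨x, hx, rfl⟩ := Finset.mem_image.mp hj
          exact Finset.mem_erase.mpr ⟨hψ3 x hx, hψ1 x hx⟩
        · exact Finset.card_image_le.trans (by omega)
        · intro x hx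
          exact Finset.mem_biUnion.mpr ⟨ψ x, Finset.mem_image_of_mem _ hx, hψ2 x hx⟩
      have h1 := ih (I.erase i) (fun j => B j \ B i) (by
        intro j hj R hR hRc hsub
        have hj' := Finset.mem_erase.mp hj
        refine h j hj'.2 (insert i R) ?_ ((Finset.card_insert_le _ _).trans (by omega)) ?_
        · intro z hz
          rcases Finset.mem_insert.mp hz with rfl | hz
          · exact Finset.mem_erase.mpr ⟨hj'.1.symm, hi⟩
          · have := Finset.mem_erase.mp (hR hz)
            exact Finset.mem_erase.mpr ⟨this.1, (Finset.mem_erase.mp this.2).2⟩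
        · intro x hx
          by_cases hxi : x ∈ B i
          · exact Finset.mem_biUnion.mpr ⟨i, Finset.mem_insert_self _ _, hxi⟩
          · obtain ⟨z, hz, hz2⟩ := Finset.mem_biUnion.mp (hsub (Finset.mem_sdiff.mpr ⟨hx, hxi⟩))
            exact Finset.mem_biUnion.mpr ⟨z, Finset.mem_insert_of_mem hz, (Finset.mem_sdiff.mp hz2).1⟩)
      have h2 : (B i).card + ((I.erase i).biUnion (fun j => B j \ B i)).card ≤ (I.biUnion B).card := by
        rw [← Finset.card_union_of_disjoint]
        · apply Finset.card_le_card
          intro x hx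
          rcases Finset.mem_union.mp hx with hx | hx
          · exact Finset.mem_biUnion.mpr ⟨i, hi, hx⟩
          · obtain ⟨z, hz, hz2⟩ := Finset.mem_biUnion.mp hx
            exact Finset.mem_biUnion.mpr ⟨z, Finset.mem_of_mem_erase hz, (Finset.mem_sdiff.mp hz2).1⟩
        · rw [Finset.disjoint_left]
          intro x hx hx2
          obtain ⟨z, hz, hz2⟩ := Finset.mem_biUnion.mp hx2
          exact (Finset.mem_sdiff.mp hz2).2 hx
      have h3 : (r + 1 + 2).choose 2 = (r + 2) + (r + 2).choose 2 := by
        rw [show r + 1 + 2 = (r + 2) + 1 by ring, Nat.choose_succ_succ' (r+2) 1]; simp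
      have h4 : (I.erase i).card = I.card - 1 := Finset.card_erase_of_mem hi
      rw [h3]
      omega

lemma aux_inv (a p : ℕ) (ha : 1 ≤ a) (hp : p.Prime) (hpa : a + 1 < p) :
    ∃ z, 1 ≤ z ∧ z ≤ a ∧ p * z ≡ 1 [MOD a] := by
  rcases Nat.eq_or_lt_of_le ha with rfl | h
  · exact ⟨1, le_rfl, le_rfl, Nat.modEq_one⟩
  · have hc : p.Coprime a := (Nat.Prime.coprime_iff_not_dvd hp).mpr
      (fun hd => by have := Nat.le_of_dvd (by omega) hd; omega)
    obtain ⟨m, hm, h1⟩ := Nat.exists_mul_mod_eq_one_of_coprime hc h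
    refine ⟨m, ?_, hm.le, ?_⟩
    · rcases Nat.eq_zero_or_pos m with rfl | h2
      · simp at h1
      · exact h2
    · rw [Nat.ModEq, h1, Nat.mod_eq_of_lt h]

lemma aux_mem (a b n w : ℕ) (ha : 1 ≤ a) (hb : 1 ≤ b) (hw : w ≡ 1 [MOD a]) (hw2 : 2 ≤ w)
    (hn : b * w ≤ n) : b * w ∈ {m : ℕ | ∃ k : ℕ, 1 ≤ k ∧ k ≤ n ∧ m = a * k + b} := by
  obtain ⟨j, hj⟩ := (Nat.modEq_iff_dvd' (by omega)).mp hw.symm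
  have hw' : w = 1 + a * j := by omega
  have hj1 : 1 ≤ j := by
    rcases Nat.eq_zero_or_pos j with rfl | h
    · simp at hj; omega
    · exact h
  refine ⟨b * j, Nat.mul_pos hb hj1, ?_, ?_⟩
  · refine le_trans (Nat.mul_le_mul_left b ?_) hn
    nlinarith
  · rw [hw']; ring

lemma aux_lower (a b n x r d : ℕ) (ha : 1 ≤ a) (hb : 1 ≤ b) (hx : 1 ≤ x) (hr : 1 ≤ r)
    (hsize : b * ((a + 1) * (a * x) ^ r) ≤ n)
    (f : ℕ → Finset (Fin d))
    (hf : ∀ u ∈ {m : ℕ | ∃ k : ℕ, 1 ≤ k ∧ k ≤ n ∧ m = a * k + b},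
      ∀ v ∈ {m : ℕ | ∃ k : ℕ, 1 ≤ k ∧ k ≤ n ∧ m = a * k + b}, (f u ⊆ f v ↔ u ∣ v)) :
    min (Nat.primeCounting x - (a + 2)) ((r + 2).choose 2) ≤ d := by
  classical
  set I := (Nat.primesLE x).filter (fun p => a + 1 < p) with hI
  have hmemI : ∀ p ∈ I, p.Prime ∧ p ≤ x ∧ a + 1 < p := by
    intro p hp
    have h1 := Finset.mem_filter.mp hp
    have h2 := Nat.mem_primesLE.mp h1.1
    exact ⟨h2.2, h2.1, h1.2⟩
  have hIcard : Nat.primeCounting x - (a + 2) ≤ I.card := by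
    rw [← Nat.primesLE_card_eq_primeCounting]
    have : Nat.primesLE x ⊆ I ∪ Finset.range (a + 2) := by
      intro p hp
      by_cases h : a + 1 < p
      · exact Finset.mem_union_left _ (Finset.mem_filter.mpr ⟨hp, h⟩)
      · exact Finset.mem_union_right _ (Finset.mem_range.mpr (by omega))
    have h2 := (Finset.card_le_card this).trans (Finset.card_union_le _ _)
    rw [Finset.card_range] at h2
    omega
  have hz : ∀ p ∈ I, ∃ z, 1 ≤ z ∧ z ≤ a ∧ p * z ≡ 1 [MOD a] := fun p hp =>
    aux_inv a p ha (hmemI p hp).1 (hmemI p hp).2.2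
  choose! z hz1 hz2 hz3 using hz
  have hax : 1 ≤ a * x := Nat.mul_pos ha hx
  have hzle : ∀ p ∈ I, p * z p ≤ a * x := by
    intro p hp
    rw [mul_comm a x]
    exact Nat.mul_le_mul (hmemI p hp).2.1 (hz2 p hp)
  have hmem1 : ∀ p ∈ I, b * (p * z p) ∈ {m : ℕ | ∃ k : ℕ, 1 ≤ k ∧ k ≤ n ∧ m = a * k + b} := by
    intro p hp
    apply aux_mem a b n _ ha hb (hz3 p hp)
    · have := hz1 p hp
      have := (hmemI p hp).1.two_le
      nlinarith
    · refine le_trans (Nat.mul_le_mul_left b ?_) hsize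
      calc p * z p ≤ a * x := hzle p hp
        _ = (a * x) ^ 1 := (pow_one _).symm
        _ ≤ (a * x) ^ r := Nat.pow_le_pow_right hax hr
        _ ≤ (a + 1) * (a * x) ^ r := Nat.le_mul_of_pos_left _ (by omega)
  have hmain := aux_cover r I (fun p => f (b * (p * z p))) (by
    intro p hp R hR hRc hsub
    have hRI : ∀ j ∈ R, j ∈ I := fun j hj => Finset.mem_of_mem_erase (hR hj)
    have hw1 : (a + 1) * ∏ j ∈ R, (j * z j) ≡ 1 [MOD a] := by
      have h1 : a + 1 ≡ 1 [MOD a] := by simp [Nat.ModEq]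
      have h2 : ∏ j ∈ R, (j * z j) ≡ 1 [MOD a] := by
        refine Finset.prod_induction _ (fun t => t ≡ 1 [MOD a]) ?_ rfl (fun j hj => hz3 j (hRI j hj))
        intro s t hs ht
        simpa using hs.mul ht
      simpa using h1.mul h2
    have hpos : 1 ≤ ∏ j ∈ R, (j * z j) := by
      apply Nat.succ_le_of_lt
      apply Finset.prod_pos
      intro j hj
      exact Nat.mul_pos (hmemI j (hRI j hj)).1.pos (hz1 j (hRI j hj))
    have hle : ∏ j ∈ R, (j * z j) ≤ (a * x) ^ r := by
      refine (Finset.prod_le_pow_card R _ (a * x) (fun j hj => hzle j (hRI j hj))).trans ?_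
      exact Nat.pow_le_pow_right hax hRc
    have hX := aux_mem a b n _ ha hb hw1 (by nlinarith)
      ((Nat.mul_le_mul_left b (Nat.mul_le_mul_left (a + 1) hle)).trans hsize)
    have hsub2 : f (b * (p * z p)) ⊆ f (b * ((a + 1) * ∏ j ∈ R, (j * z j))) := by
      intro t ht
      obtain ⟨j, hj, hjt⟩ := Finset.mem_biUnion.mp (hsub ht)
      refine (hf _ (hmem1 j (hRI j hj)) _ hX).mpr ?_ hjt
      exact Nat.mul_dvd_mul_left b (Dvd.dvd.mul_left (Finset.dvd_prod_of_mem _ hj) _)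
    have hdvd := (hf _ (hmem1 p hp) _ hX).mp hsub2
    have hdvd2 := Nat.dvd_of_mul_dvd_mul_left (by omega) hdvd
    have hpp := (hmemI p hp).1
    have hpa := (hmemI p hp).2.2
    have hpd : p ∣ (a + 1) * ∏ j ∈ R, (j * z j) := (Dvd.intro _ rfl).trans hdvd2
    rcases hpp.dvd_mul.mp hpd with h1 | h1
    · have := Nat.le_of_dvd (by omega) h1; omega
    · obtain ⟨j, hj, hj2⟩ := (Prime.dvd_finsetProd_iff hpp.prime _).mp h1
      rcases hpp.dvd_mul.mp hj2 with h2 | h2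
      · have := (Nat.prime_dvd_prime_iff_eq hpp (hmemI j (hRI j hj)).1).mp h2
        exact (Finset.mem_erase.mp (hR hj)).1 this.symm
      · have := Nat.le_of_dvd (hz1 j (hRI j hj)) h2
        have := hz2 j (hRI j hj)
        omega)
  have h5 : (I.biUnion (fun p => f (b * (p * z p)))).card ≤ d := by
    simpa using Finset.card_le_univ (I.biUnion (fun p => f (b * (p * z p))))
  omega

lemma aux_asym_upper (M : ℕ) (l t s : ℝ) (hs1 : 1 ≤ s) (hl : l = s ^ 2) (ht : t = Real.log l)
    (ht1 : 1 ≤ t) (hts : t ≤ s / 10) (hM : Real.log ((M : ℝ) + 1) ≤ 11 / 10 * l) (S : Set ℕ)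
    (hS : ∀ m ∈ S, 0 < m ∧ m ≤ M) :
    ∃ D, D ∈ {d : ℕ | ∃ f : ℕ → Finset (Fin d), ∀ a ∈ S, ∀ b ∈ S, (f a ⊆ f b ↔ a ∣ b)} ∧
      (D : ℝ) ≤ 24 * l ^ 2 / t := by
  have hl0 : 1 ≤ l := by rw [hl]; nlinarith
  set LM := Real.log ((M : ℝ) + 1) with hLM
  have hLM0 : 0 ≤ LM := Real.log_nonneg (by linarith [(Nat.cast_nonneg M : (0:ℝ) ≤ M)])
  set y := ⌊s⌋₊ with hy
  set k := ⌈11 / 5 * (l / t)⌉₊ with hk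
  have hlt : 0 < l / t := by positivity
  have hk1 : 1 ≤ k := Nat.succ_le_of_lt (Nat.ceil_pos.mpr (by positivity))
  have hkle : 11 / 5 * (l / t) ≤ k := Nat.le_ceil _
  have hkge : (k : ℝ) < 11 / 5 * (l / t) + 1 := Nat.ceil_lt_add_one (by positivity)
  set d := ⌈8 * k * LM⌉₊ + 1 with hd
  have hdle : 8 * k * LM + 1 ≤ d := by rw [hd]; push_cast; linarith [Nat.le_ceil (8 * k * LM)]
  have hdge : (d : ℝ) < 8 * k * LM + 2 := by
    rw [hd]; push_cast; linarith [Nat.ceil_lt_add_one (show 0 ≤ 8 * k * LM by positivity)]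
  have hys : s < (y : ℝ) + 1 := Nat.lt_floor_add_one s
  have hys2 : (y : ℝ) ≤ s := Nat.floor_le (by linarith)
  have hlogs : Real.log s = t / 2 := by
    rw [ht, hl, Real.log_pow]; push_cast; ring
  have hkR : (1 : ℝ) ≤ k := by exact_mod_cast hk1
  have hkt : 11 / 5 * l ≤ k * t := by
    have := mul_le_mul_of_nonneg_right hkle (show 0 ≤ t by linarith)
    have h2 : 11 / 5 * (l / t) * t = 11 / 5 * l := by field_simp
    linarith
  refine ⟨(y + 1) * (Nat.log 2 M + 1) + d, aux_upper M y k d hk1 ?_ ?_ S hS, ?_⟩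
  · have : (M : ℝ) + 1 < ((y : ℝ) + 1) ^ (k + 1) := by
      rw [← Real.log_lt_log_iff (by positivity) (by positivity), Real.log_pow]
      have h1 : t / 2 < Real.log ((y : ℝ) + 1) := by
        rw [← hlogs]; exact Real.log_lt_log (by linarith) hys
      push_cast
      have h9 : (k : ℝ) * (t / 2) ≤ k * Real.log ((y : ℝ) + 1) := by gcongr
      rw [add_mul, one_mul]
      linarith
    have h2 : ((M + 1 : ℕ) : ℝ) < (((y + 1) ^ (k + 1) : ℕ) : ℝ) := by push_cast; exact this
    have := Nat.cast_lt.mp h2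
    omega
  · have h1 : (1 - 1 / (4 * (k : ℝ))) ≤ Real.exp (-(1 / (4 * k))) := by
      have := Real.add_one_le_exp (-(1 / (4 * (k : ℝ)))); linarith
    have h0 : (0 : ℝ) ≤ 1 - 1 / (4 * k) := by
      have : 1 / (4 * k : ℝ) ≤ 1 := by rw [div_le_one (by positivity)]; linarith
      linarith
    have hM1 : (M : ℝ) + 1 = Real.exp LM := (Real.exp_log (by positivity)).symm
    calc ((M : ℝ) + 1) ^ 2 * (1 - 1 / (4 * k)) ^ d ≤ Real.exp LM ^ 2 * Real.exp (-(1 / (4 * k))) ^ d := by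
          rw [hM1]; gcongr
      _ = Real.exp (2 * LM - d / (4 * k)) := by
          rw [← Real.exp_nat_mul, ← Real.exp_nat_mul, ← Real.exp_add]; congr 1; push_cast; ring
      _ < 1 := by
          rw [Real.exp_lt_one_iff]
          have : 2 * LM < d / (4 * k) := by
            rw [lt_div_iff₀ (by positivity)]; linarith
          linarith
  · have hlog2 : (Nat.log 2 M : ℝ) ≤ 2 * LM := by
      rcases Nat.eq_zero_or_pos M with h0 | h0
      · rw [h0]; simpa using hLM0
      · have h1 := Nat.pow_log_le_self 2 h0.ne'
        have h2 : (2 : ℝ) ^ (Nat.log 2 M) ≤ (M : ℝ) + 1 := by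
          have : ((2 ^ (Nat.log 2 M) : ℕ) : ℝ) ≤ M := Nat.cast_le.mpr h1
          push_cast at this; linarith
        have h3 := Real.log_le_log (by positivity) h2
        rw [Real.log_pow] at h3
        have h4 := Real.log_two_gt_d9
        have h5 : (0 : ℝ) ≤ Nat.log 2 M := Nat.cast_nonneg _
        have h6 : (Nat.log 2 M : ℝ) * (1 / 2) ≤ Nat.log 2 M * Real.log 2 :=
          mul_le_mul_of_nonneg_left (by linarith) h5
        linarith
    push_cast
    rw [le_div_iff₀ (by linarith)]
    have hA : ((y : ℝ) + 1) * ((Nat.log 2 M : ℝ) + 1) ≤ (2 * s) * (16 / 5 * l) := by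
      apply mul_le_mul (by linarith) (by linarith) (by positivity) (by linarith)
    have hB : (d : ℝ) * t ≤ 484 / 25 * l ^ 2 + 44 / 5 * l * t + 2 * t := by
      have h1 : 8 * k * LM ≤ 8 * k * (11 / 10 * l) := by gcongr
      have h2 : (k : ℝ) * t ≤ 11 / 5 * l + t := by
        have := mul_le_mul_of_nonneg_right hkge.le (show 0 ≤ t by linarith)
        have h2 : (11 / 5 * (l / t) + 1) * t = 11 / 5 * l + t := by field_simp
        linarith
      have h3 : (d : ℝ) * t ≤ (8 * k * (11 / 10 * l) + 2) * t :=
        mul_le_mul_of_nonneg_right (by linarith) (by linarith)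
      have h4 : (k * t) * l ≤ (11 / 5 * l + t) * l := mul_le_mul_of_nonneg_right h2 (by linarith)
      linarith
    have hC : ((y : ℝ) + 1) * ((Nat.log 2 M : ℝ) + 1) * t ≤ (2 * s) * (16 / 5 * l) * (s / 10) :=
      mul_le_mul hA hts (by linarith) (by positivity)
    have hD : (2 * s) * (16 / 5 * l) * (s / 10) = 16 / 25 * l ^ 2 := by rw [hl]; ring
    have hsl : s ≤ l := by rw [hl]; nlinarith
    have htl : t ≤ l / 10 := by linarith
    have hE : l * t ≤ l * (l / 10) := mul_le_mul_of_nonneg_left htl (by linarith)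
    have hF : l ≤ l ^ 2 := le_self_pow₀ hl0 (by norm_num)
    have hG : l * (l / 10) = l ^ 2 / 10 := by ring
    rw [add_mul]
    linarith

lemma aux_asym_lower (a b n : ℕ) (ha : 1 ≤ a) (hb : 1 ≤ b) (l t : ℝ) (hn : 1 ≤ n)
    (hl : l = Real.log n) (ht : t = Real.log l)
    (ht1 : 1 ≤ t) (hts : 10 * t ≤ l) (hl100 : 100 ≤ l)
    (hal : (a : ℝ) + 2 ≤ l) (hC : Real.log (b * (a + 1)) ≤ l / 10) (hat : Real.log a ≤ t / 10)
    (d : ℕ)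
    (f : ℕ → Finset (Fin d))
    (hf : ∀ u ∈ {m : ℕ | ∃ k : ℕ, 1 ≤ k ∧ k ≤ n ∧ m = a * k + b},
      ∀ v ∈ {m : ℕ | ∃ k : ℕ, 1 ≤ k ∧ k ≤ n ∧ m = a * k + b}, (f u ⊆ f v ↔ u ∣ v)) :
    1 / 16 * l ^ 2 / t ^ 2 ≤ d := by
  have haR : (1 : ℝ) ≤ a := by exact_mod_cast ha
  have hbR : (1 : ℝ) ≤ b := by exact_mod_cast hb
  have hnR : (1 : ℝ) ≤ n := by exact_mod_cast hn
  set x := ⌊l ^ 2⌋₊ with hx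
  set r := ⌊2 / 5 * (l / t)⌋₊ with hr
  have hlt : 10 ≤ l / t := by rw [le_div_iff₀ (by linarith)]; exact hts
  have hr1 : 1 ≤ r := Nat.le_floor (by push_cast; linarith)
  have hx1 : 1 ≤ x := Nat.le_floor (by push_cast; nlinarith)
  have hxR : (1 : ℝ) ≤ x := by exact_mod_cast hx1
  have hrle : (r : ℝ) ≤ 2 / 5 * (l / t) := Nat.floor_le (by linarith)
  have hrge : 2 / 5 * (l / t) < r + 1 := Nat.lt_floor_add_one _
  have hxle : (x : ℝ) ≤ l ^ 2 := Nat.floor_le (by positivity)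
  have hlogl2 : Real.log (l ^ 2) = 2 * t := by rw [Real.log_pow, ht]; push_cast; ring
  have hsize : b * ((a + 1) * (a * x) ^ r) ≤ n := by
    have : (b : ℝ) * ((a + 1) * (a * x) ^ r) ≤ n := by
      rw [← Real.log_le_log_iff (by positivity) (by linarith), ← mul_assoc,
        Real.log_mul (by positivity) (by positivity), Real.log_pow,
        Real.log_mul (x := (a : ℝ)) (by positivity) (by positivity), ← hl]
      have h1 : Real.log x ≤ 2 * t := by
        rw [← hlogl2]; exact Real.log_le_log (by linarith) hxle
      have h2 : (r : ℝ) * (Real.log a + Real.log x) ≤ 2 / 5 * (l / t) * (21 / 10 * t) := by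
        apply mul_le_mul hrle (by linarith) _ (by linarith)
        have := Real.log_nonneg haR
        have := Real.log_nonneg hxR
        linarith
      have h3 : 2 / 5 * (l / t) * (21 / 10 * t) = 21 / 25 * l := by field_simp; norm_num
      linarith
    exact_mod_cast this
  have hmain := aux_lower a b n x r d ha hb hx1 hr1 hsize f hf
  have hrw : 1 / 16 * l ^ 2 / t ^ 2 = 1 / 16 * (l / t) ^ 2 := by rw [div_pow]; ring
  rcases min_le_iff.mp hmain with h | h
  · have hpi := Chebyshev.pi_ge' (x := l ^ 2) (by nlinarith)
    rw [hlogl2, div_le_iff₀ (by linarith), ← hx] at hpi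
    have hlog : Real.log (l ^ 2 + 2) ≤ 2 * t + 1 := by
      have h1 : l ^ 2 + 2 ≤ l ^ 2 * Real.exp 1 := by
        have := Real.exp_one_gt_d9
        nlinarith
      have h2 := Real.log_le_log (by positivity) h1
      rw [Real.log_mul (by positivity) (by positivity), hlogl2, Real.log_exp] at h2
      exact h2
    have h2 := Real.log_two_gt_d9
    have hl2 : 100 * l ≤ l ^ 2 := by nlinarith
    have h3 : l ^ 2 / 2 ≤ Nat.primeCounting x * (2 * t) := by
      have h31 : (l ^ 2 - 1) * (69 / 100) ≤ (l ^ 2 - 1) * Real.log 2 :=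
        mul_le_mul_of_nonneg_left (by linarith) (by linarith)
      linarith
    have h4 : (Nat.primeCounting x : ℝ) ≤ d + (a + 2) := by
      have : Nat.primeCounting x ≤ d + (a + 2) := by omega
      exact_mod_cast this
    rw [div_le_iff₀ (by positivity)]
    have h5 : l ^ 2 / 4 ≤ (d + l) * t := by
      have : (Nat.primeCounting x : ℝ) * t ≤ (d + l) * t :=
        mul_le_mul_of_nonneg_right (by linarith) (by linarith)
      linarith
    have h6 : l ^ 2 * (3 / 20) ≤ d * t := by
      have : l * (10 * t) ≤ l * l := mul_le_mul_of_nonneg_left hts (by linarith)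
      linarith
    have h7 : (d : ℝ) * t ≤ d * t ^ 2 := by
      have : (0 : ℝ) ≤ d := Nat.cast_nonneg _
      exact mul_le_mul_of_nonneg_left (by nlinarith) this
    linarith
  · rw [hrw]
    have h1 : ((r + 2).choose 2 : ℝ) ≤ d := by exact_mod_cast h
    rw [Nat.cast_choose_two] at h1
    push_cast at h1
    have h2 : (2 / 5 * (l / t)) ^ 2 ≤ ((r : ℝ) + 1) ^ 2 :=
      pow_le_pow_left₀ (by linarith) hrge.le 2
    have h3 : (0 : ℝ) ≤ r := Nat.cast_nonneg _
    generalize l / t = z at *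
    linarith [sq_nonneg z]

/-- For fixed positive integers `a, b`, for every `ε > 0` and all large `n`,
`(1/16 - ε) (log n)²/(log log n)² ≤ dim₂(D_{a[n]+b})
  ≤ ((4/3) e π² + ε) (log n)²/log log n`. -/
theorem divDim2_arith_prog_bounds (a b : ℕ) (ha : 1 ≤ a) (hb : 1 ≤ b) :
    ∀ ε : ℝ, 0 < ε → ∃ N : ℕ, ∀ n : ℕ, N ≤ n →
      (1 / 16 - ε) * (Real.log n) ^ 2 / (Real.log (Real.log n)) ^ 2
          ≤ (divDim2 {m : ℕ | ∃ k : ℕ, 1 ≤ k ∧ k ≤ n ∧ m = a * k + b} : ℝ) ∧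
        (divDim2 {m : ℕ | ∃ k : ℕ, 1 ≤ k ∧ k ≤ n ∧ m = a * k + b} : ℝ)
          ≤ ((4 / 3) * Real.exp 1 * Real.pi ^ 2 + ε) * (Real.log n) ^ 2
              / Real.log (Real.log n) := by
  intro ε hε
  have hT1 : Filter.Tendsto (fun n : ℕ => Real.log n) Filter.atTop Filter.atTop :=
    Real.tendsto_log_atTop.comp tendsto_natCast_atTop_atTop
  have hT2 : Filter.Tendsto (fun n : ℕ => Real.log (Real.log n)) Filter.atTop Filter.atTop :=
    Real.tendsto_log_atTop.comp hT1
  have hlo : ∀ᶠ x : ℝ in Filter.atTop, Real.log x ≤ √x / 10 := by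
    have := (isLittleO_log_rpow_atTop (r := 1 / 2) (by norm_num)).bound
      (show (0 : ℝ) < 1 / 10 by norm_num)
    filter_upwards [this, Filter.eventually_ge_atTop 1] with x hx hx1
    rw [← Real.sqrt_eq_rpow, Real.norm_of_nonneg (Real.sqrt_nonneg x)] at hx
    have := le_trans (Real.le_norm_self _) hx
    linarith
  have hev : ∀ᶠ n : ℕ in Filter.atTop, 1 ≤ n ∧ 1 ≤ Real.log (Real.log n) ∧
      Real.log (Real.log n) ≤ √(Real.log n) / 10 ∧ 100 ≤ Real.log n ∧ (a : ℝ) + 2 ≤ Real.log n ∧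
      Real.log (b * (a + 1)) * 10 ≤ Real.log n ∧ Real.log a * 10 ≤ Real.log (Real.log n) ∧
      Real.log (a + b + 1) * 10 ≤ Real.log n := by
    filter_upwards [Filter.eventually_ge_atTop 1, hT2.eventually_ge_atTop 1, hT1.eventually hlo,
      hT1.eventually_ge_atTop 100, hT1.eventually_ge_atTop ((a : ℝ) + 2),
      hT1.eventually_ge_atTop (Real.log (b * (a + 1)) * 10),
      hT2.eventually_ge_atTop (Real.log a * 10),
      hT1.eventually_ge_atTop (Real.log (a + b + 1) * 10)] with n h1 h2 h3 h4 h5 h6 h7 h8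
    exact ⟨h1, h2, h3, h4, h5, h6, h7, h8⟩
  obtain ⟨N, hN⟩ := Filter.eventually_atTop.mp hev
  refine ⟨N, fun n hn => ?_⟩
  obtain ⟨h1, h2, h3, h4, h5, h6, h7, h8⟩ := hN n hn
  set l := Real.log n with hl
  set t := Real.log l with ht
  set S := {m : ℕ | ∃ k : ℕ, 1 ≤ k ∧ k ≤ n ∧ m = a * k + b} with hS
  have hs1 : 1 ≤ √l := Real.one_le_sqrt.mpr (by linarith)
  have hsq : l = √l ^ 2 := (Real.sq_sqrt (by linarith)).symm
  have hnR : (1 : ℝ) ≤ n := by exact_mod_cast h1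
  have haR : (1 : ℝ) ≤ a := by exact_mod_cast ha
  have hbR : (1 : ℝ) ≤ b := by exact_mod_cast hb
  obtain ⟨D, hD, hDle⟩ := aux_asym_upper (a * n + b) l t (√l) hs1 hsq ht h2 h3 (by
    have e1 : (((a * n + b : ℕ) : ℝ)) + 1 ≤ (a + b + 1) * n := by push_cast; nlinarith
    have e2 := Real.log_le_log (by positivity) e1
    rw [Real.log_mul (by positivity) (by positivity), ← hl] at e2
    linarith) S (by
    rintro m ⟨k, hk1, hk2, rfl⟩
    exact ⟨by omega, by gcongr⟩)
  have ht10 : 10 * t ≤ l := by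
    have : √l ≤ l := by nlinarith
    linarith
  constructor
  · obtain ⟨f, hf⟩ := Nat.sInf_mem ⟨D, hD⟩
    have := aux_asym_lower a b n ha hb l t h1 hl ht h2 ht10 h4 h5 (by linarith) (by linarith)
      (divDim2 S) f hf
    refine le_trans ?_ this
    gcongr
    linarith
  · have e1 : (divDim2 S : ℝ) ≤ D := by exact_mod_cast Nat.sInf_le hD
    refine e1.trans (hDle.trans ?_)
    have hpi := Real.pi_gt_three
    have hexp := Real.exp_one_gt_d9
    gcongr
    have h9 : 9 ≤ Real.pi ^ 2 := by nlinarith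
    have : 2 * 9 ≤ Real.exp 1 * Real.pi ^ 2 := mul_le_mul (by linarith) h9 (by norm_num) (by positivity)
    linarith
end
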